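/- arXiv:2408.09390 — 6 statements merged into one kernel-verified Lean document; each statement's English description precedes it below -/
import Mathlib

section
/- Let k be a field, let L/k be a finite Galois extension, and let K/k be an arbitrary field extension. Then the tensor product K ⊗_k L is a field if and only if the only intermediate field F of L/k admitting a k-algebra homomorphism F → K is F = k. -/
open scoped TensorProduct

/-!
If `K ⊗[k] L` is a field and `F ⊆ L` embeds in `K`, then the nonzero ring homomorphism
`K ⊗[k] L → K ⊗[F] L` is injective, although it identifies `x ⊗ 1` with `1 ⊗ x` for `x ∈ F`; hence
these agree already in `K ⊗[k] L`, which forces `x ∈ k`.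

Conversely, `K ⊗[k] L` is a field as soon as `K` and `L` are linearly disjoint in every common
extension `E`. If `K ∩ L = k` in `E` and `x ∈ L`, the minimal polynomial of `x` over `K` is a
product of conjugates `X - xᵢ` with `xᵢ ∈ L`, because `L / k` is normal. So its coefficients lie in
`K ∩ L = k`, and `x` has the same degree over `K` as over `k`. Applied to primitive elements of the
finite subextensions of `L / k`, this gives linear disjointness.
-/

section

open IntermediateField Polynomial

section Minpoly

theorem mem_lifts_of_dvd_map_of_splits {A E : Type*} [Field A] [CommRing E] [IsDomain E]
    (i : A →+* E) {p : A[X]} (hp : p.Splits) (hp₀ : p ≠ 0) {q : E[X]} (hq : q.Monic)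
    (hqp : q ∣ p.map i) : q ∈ lifts i := by
  have hpi : p.map i ≠ 0 := Polynomial.map_ne_zero hp₀
  refine ((hp.map i).of_dvd hpi hqp).mem_lift_of_roots_mem_range hq i fun a ha ↦ ?_
  have hroot : a ∈ (p.map i).roots := Multiset.mem_of_le (roots.le_of_dvd hpi hqp) ha
  exact hp.mem_range_of_isRoot hp₀ (isRoot_of_mem_roots hroot)

theorem map_minpoly_eq_of_minpoly_mem_lifts {F B E : Type*} [Field F] [Field B] [Ring E]
    [IsDomain E] [Algebra F B] [Algebra F E] [Algebra B E] [IsScalarTower F B E] {x : E}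
    (hx : IsIntegral F x) (h : minpoly B x ∈ lifts (algebraMap F B)) :
    (minpoly F x).map (algebraMap F B) = minpoly B x := by
  have hxB : IsIntegral B x := hx.tower_top
  obtain ⟨q, hq, -, hq_monic⟩ := lifts_and_natDegree_eq_and_monic h (minpoly.monic hxB)
  have hq_irr : Irreducible q :=
    hq_monic.irreducible_of_irreducible_map _ _ (hq ▸ minpoly.irreducible hxB)
  have hq_root : aeval x q = 0 := by
    rw [← aeval_map_algebraMap B, hq, minpoly.aeval]
  rw [← minpoly.eq_of_irreducible_of_monic hq_irr hq_root hq_monic, hq]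

variable {F E : Type*} [Field F] [Field E] [Algebra F E] {A B : IntermediateField F E}

theorem mem_lifts_of_map_mem_lifts_of_inf_eq_bot (h : A ⊓ B = ⊥) {q : B[X]}
    (hq : q.map (algebraMap B E) ∈ lifts (algebraMap A E)) : q ∈ lifts (algebraMap F B) := by
  rw [lifts_iff_coeff_lifts] at hq ⊢
  intro n
  obtain ⟨a, ha⟩ := hq n
  have hA : (q.coeff n : E) ∈ A := by
    rw [coeff_map] at ha
    exact ha.subst (motive := (· ∈ A)) a.2
  obtain ⟨c, hc⟩ := mem_bot.1 (h.le ⟨hA, (q.coeff n).2⟩)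
  exact ⟨c, Subtype.ext hc⟩

theorem map_minpoly_eq_of_inf_eq_bot [Normal F A] (h : A ⊓ B = ⊥) {x : E} (hx : x ∈ A) :
    (minpoly F x).map (algebraMap F B) = minpoly B x := by
  lift x to A using hx
  have hxA : IsIntegral F x := Normal.isIntegral ‹_› x
  have hxE : IsIntegral F (x : E) := hxA.map A.val
  have hsplits : ((minpoly F x).map (algebraMap F A)).Splits := Normal.splits ‹_› x
  have hdvd : (minpoly B (x : E)).map (algebraMap B E) ∣
      ((minpoly F x).map (algebraMap F A)).map (algebraMap A E) := by
    have := Polynomial.map_dvd (algebraMap B E) (minpoly.dvd_map_of_isScalarTower F B (x : E))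
    rwa [Polynomial.map_map, ← IsScalarTower.algebraMap_eq, IsScalarTower.algebraMap_eq F A E,
      ← Polynomial.map_map, ← minpoly_eq] at this
  have hlifts : (minpoly B (x : E)).map (algebraMap B E) ∈ lifts (algebraMap A E) :=
    mem_lifts_of_dvd_map_of_splits _ hsplits (Polynomial.map_ne_zero (minpoly.ne_zero hxA))
      ((minpoly.monic hxE.tower_top).map _) hdvd
  exact map_minpoly_eq_of_minpoly_mem_lifts hxE (mem_lifts_of_map_mem_lifts_of_inf_eq_bot h hlifts)

end Minpoly

section LinearDisjoint

variable {F E : Type*} [Field F] [Field E] [Algebra F E] {A : IntermediateField F E}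

section

variable {L : Type*} [Field L] [Algebra F L] [Algebra L E] [IsScalarTower F L E]

theorem linearDisjoint_of_natDegree_minpoly_gen_eq_dim (pb : PowerBasis F A)
    (h : (minpoly L (pb.gen : E)).natDegree = pb.dim) : A.LinearDisjoint L := by
  refine LinearDisjoint.of_basis_left pb.basis ?_
  have hpow : LinearIndependent L fun i : Fin pb.dim ↦ (pb.gen : E) ^ (i : ℕ) :=
    h ▸ linearIndependent_pow (pb.gen : E)
  simpa [Function.comp_def] using hpow

theorem linearDisjoint_of_forall_finiteDimensional [Algebra.IsAlgebraic F A]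
    (h : ∀ A' ≤ A, FiniteDimensional F A' → A'.LinearDisjoint L) : A.LinearDisjoint L := by
  refine Submodule.LinearDisjoint.of_linearDisjoint_fg_left _ _ fun M hMA hM ↦ ?_
  obtain ⟨s, rfl⟩ := hM
  have hsA : (s : Set E) ⊆ A := Submodule.span_le.1 hMA
  have hfin : FiniteDimensional F (adjoin F (s : Set E)) := finiteDimensional_adjoin fun x hx ↦
    isIntegral_iff.1 (Algebra.IsIntegral.isIntegral (⟨x, hsA hx⟩ : A))
  have hdisj : (adjoin F (s : Set E)).LinearDisjoint L := h _ (adjoin_le_iff.2 hsA) hfin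
  exact Submodule.LinearDisjoint.of_le_left_of_flat hdisj (Submodule.span_le.2 (subset_adjoin F _))

end

theorem linearDisjoint_of_isGalois_of_inf_eq_bot {B : IntermediateField F E} [IsGalois F A]
    (h : A ⊓ B = ⊥) : A.LinearDisjoint B := by
  refine linearDisjoint_of_forall_finiteDimensional fun A' hA' _ ↦ ?_
  have : Algebra.IsSeparable F A' := .of_algHom F A (inclusion hA')
  let pb := Field.powerBasisOfFiniteOfSeparable F A'
  refine linearDisjoint_of_natDegree_minpoly_gen_eq_dim pb ?_
  rw [← map_minpoly_eq_of_inf_eq_bot h (hA' pb.gen.2), natDegree_map, ← minpoly_eq,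
    pb.natDegree_minpoly]

end LinearDisjoint

theorem nonempty_algHom_comap_fieldRange {k L K E : Type*} [Field k] [Field L] [Field K] [Field E]
    [Algebra k L] [Algebra k K] [Algebra k E] (f : L →ₐ[k] E) (g : K →ₐ[k] E) :
    Nonempty (g.fieldRange.comap f →ₐ[k] K) :=
  let toRange : g.fieldRange.comap f →ₐ[k] g.fieldRange :=
    (f.comp (g.fieldRange.comap f).val).codRestrict g.fieldRange.toSubalgebra fun x ↦ x.2
  ⟨(AlgEquiv.ofInjectiveField g).symm.toAlgHom.comp toRange⟩

theorem eq_bot_of_isField_tensorProduct {k L K : Type*} [Field k] [Field L] [CommRing K]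
    [Algebra k L] [Algebra k K] (h : IsField (K ⊗[k] L)) {F : IntermediateField k L}
    (g : F →ₐ[k] K) : F = ⊥ := by
  let := h.toField
  let ι : L →ₐ[k] K ⊗[k] L := Algebra.TensorProduct.includeRight
  have : Nontrivial K :=
    (Algebra.TensorProduct.includeLeft : K →ₐ[k] K ⊗[k] L).toRingHom.domain_nontrivial
  algebraize [g.toRingHom]
  have : IsScalarTower k F K := .of_algebraMap_eq fun c ↦ (g.commutes c).symm
  let π : K ⊗[k] L →ₐ[k] K ⊗[F] L := Algebra.TensorProduct.mapOfCompatibleSMul F k k K L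
  have hπ (x : F) : π (g x ⊗ₜ 1) = π (1 ⊗ₜ (x : L)) := by
    have hsmul := TensorProduct.smul_tmul (R := F) x (1 : K) (1 : L)
    rwa [Algebra.smul_def, Algebra.smul_def, mul_one, mul_one] at hsmul
  have htmul (x : F) : g x ⊗ₜ[k] (1 : L) = ι x := π.toRingHom.injective (hπ x)
  refine eq_bot_iff.2 fun x hx ↦ ?_
  have hbot : ι x ∈ (⊥ : Subalgebra k (K ⊗[k] L)) :=
    (Subalgebra.LinearDisjoint.include_range k K L).inf_eq_bot.le
      ⟨⟨g ⟨x, hx⟩, htmul ⟨x, hx⟩⟩, ⟨x, rfl⟩⟩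
  obtain ⟨c, hc⟩ := Algebra.mem_bot.1 hbot
  exact mem_bot.2 ⟨c, ι.injective ((ι.commutes c).trans hc)⟩

theorem tensorProduct_isField_iff_no_common_subfield_general
    (k L K : Type*) [Field k] [Field L] [Field K] [Algebra k L] [Algebra k K] [IsGalois k L] :
    IsField (K ⊗[k] L) ↔
      ∀ F : IntermediateField k L, Nonempty (F →ₐ[k] K) → F = ⊥ := by
  refine ⟨fun h F ⟨g⟩ ↦ eq_bot_of_isField_tensorProduct h g, fun h ↦ ?_⟩
  refine LinearDisjoint.isField_of_forall k K L fun E _ _ g f ↦ LinearDisjoint.symm ?_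
  have : IsGalois k f.fieldRange := .of_algEquiv (AlgEquiv.ofInjectiveField f)
  have hcomap : g.fieldRange.comap f = ⊥ := h _ (nonempty_algHom_comap_fieldRange f g)
  have hinf : f.fieldRange ⊓ g.fieldRange = ⊥ := by
    rw [inf_comm, ← map_comap_eq, hcomap, IntermediateField.map_bot]
  exact linearDisjoint_of_isGalois_of_inf_eq_bot hinf

end

/-- Let `k` be a field, `L/k` a finite Galois extension, and `K/k` an arbitrary field
extension. Then the tensor product `K ⊗[k] L` is a field if and only if the only
intermediate field `F` of `L/k` admitting a `k`-algebra homomorphism `F → K` is `F = k`. -/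
theorem tensorProduct_isField_iff_no_common_subfield
    (k L K : Type*) [Field k] [Field L] [Field K] [Algebra k L] [Algebra k K]
    [FiniteDimensional k L] [IsGalois k L] :
    IsField (K ⊗[k] L) ↔
      ∀ F : IntermediateField k L, Nonempty (F →ₐ[k] K) → F = ⊥ :=
  tensorProduct_isField_iff_no_common_subfield_general k L K
end

section
/- Let F ⊆ K be a field extension such that F is separably algebraically closed in K, i.e., every element of K that is algebraic over F with separable minimal polynomial already lies in F. Then for every finite separable field extension E/F, the tensor product K ⊗_F E is a field. -/
open scoped TensorProduct

/-!
Let `β` be separable over `F`, in an extension of `K`. The coefficients of its minimal polynomial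
over `K` are polynomial expressions in conjugates of `β`, so they are separable over `F`; as they
lie in `K`, they lie in `F`. Hence `β` has the same minimal polynomial over `F` and over `K`, and
its powers form an `F`-basis of `F⟮β⟯` which stays independent over `K`. By the primitive element
theorem `K` is linearly disjoint from every finite, hence from every algebraic, separable extension
of `F` inside an algebraic closure of `K`. So for such an extension `E` the ring `K ⊗[F] E` is a
domain integral over the field `K`, that is, a field.
-/

open Polynomial IntermediateField

section Coefficients

variable {F K : Type*} [Field F] [Field K] [Algebra F K]

theorem isSeparable_coeff_of_splits {g : K[X]} (hg : g.Monic) (hsplits : g.Splits)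
    (hroots : ∀ a ∈ g.roots, IsSeparable F a) (n : ℕ) : IsSeparable F (g.coeff n) := by
  have hlifts : g ∈ lifts (algebraMap (separableClosure F K) K) :=
    hsplits.mem_lift_of_roots_mem_range hg _ fun a ha ↦ ⟨⟨a, hroots a ha⟩, rfl⟩
  obtain ⟨c, hc⟩ := (lifts_iff_coeff_lifts g).mp hlifts n
  exact hc ▸ c.2

theorem isSeparable_coeff_of_dvd_map {p : F[X]} {g : K[X]} (hp : p.Separable) (hg : g.Monic)
    (hdvd : g ∣ p.map (algebraMap F K)) (n : ℕ) : IsSeparable F (g.coeff n) := by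
  let i := algebraMap K (AlgebraicClosure K)
  have hroots : ∀ a ∈ (g.map i).roots, IsSeparable F a := fun a ha ↦ by
    have hga : aeval a g = 0 := (mem_aroots'.mp ha).2
    have hpa : aeval a p = 0 := by
      simpa only [aeval_map_algebraMap] using aeval_eq_zero_of_dvd_aeval_eq_zero hdvd hga
    exact hp.of_dvd (minpoly.dvd F a hpa)
  have hsep := isSeparable_coeff_of_splits (hg.map i) (IsAlgClosed.splits _) hroots n
  rw [coeff_map] at hsep
  exact hsep.tower_bot

theorem minpoly_map_eq_of_separableClosure_eq_bot {L : Type*} [CommRing L] [Algebra F L]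
    [Algebra K L] [IsScalarTower F K L] (hF : separableClosure F K = ⊥) {β : L}
    (hβ : IsSeparable F β) : (minpoly F β).map (algebraMap F K) = minpoly K β := by
  refine minpoly.map_algebraMap hβ.isIntegral ((lifts_iff_coeff_lifts _).mpr fun n ↦ ?_)
  have hcoeff : (minpoly K β).coeff n ∈ separableClosure F K :=
    isSeparable_coeff_of_dvd_map hβ (minpoly.monic hβ.isIntegral.tower_top)
      (minpoly.dvd_map_of_isScalarTower F K β) n
  rwa [hF, mem_bot] at hcoeff

end Coefficients

section LinearDisjoint

variable {F K L : Type*} [Field F] [Field K] [Field L] [Algebra F K] [Algebra F L] [Algebra K L]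
  [IsScalarTower F K L] {A : IntermediateField F L}

theorem linearDisjoint_of_minpoly_map_eq (pb : PowerBasis F A)
    (hmin : (minpoly F (pb.gen : L)).map (algebraMap F K) = minpoly K (pb.gen : L)) :
    A.LinearDisjoint K := by
  have hdeg : (minpoly K (pb.gen : L)).natDegree = pb.dim := by
    rw [← hmin, natDegree_map, ← minpoly_eq, pb.natDegree_minpoly]
  have hpow : A.val ∘ pb.basis = fun i : Fin pb.dim ↦ (pb.gen : L) ^ (i : ℕ) := by
    ext i
    simp
  refine .of_basis_left pb.basis ?_
  rw [hpow, ← hdeg]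
  exact linearIndependent_pow _

theorem linearDisjoint_of_finiteDimensional_of_isSeparable [FiniteDimensional F A]
    [Algebra.IsSeparable F A] (hF : separableClosure F K = ⊥) : A.LinearDisjoint K := by
  let pb := Field.powerBasisOfFiniteOfSeparable F A
  refine linearDisjoint_of_minpoly_map_eq pb (minpoly_map_eq_of_separableClosure_eq_bot hF ?_)
  exact (Algebra.IsSeparable.isSeparable F pb.gen).map A.val A.val.injective

theorem linearDisjoint_of_isSeparable [Algebra.IsSeparable F A]
    (hF : separableClosure F K = ⊥) : A.LinearDisjoint K := by
  have : Algebra.IsIntegral F A.toSubalgebra := inferInstanceAs (Algebra.IsIntegral F A)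
  refine Subalgebra.LinearDisjoint.of_linearDisjoint_finite_left _ _ fun A' hA' _ ↦ ?_
  let B : IntermediateField F L :=
    A'.toIntermediateField' (isField_of_isIntegral_of_isField' (Field.toIsField F))
  have : FiniteDimensional F B := ‹Module.Finite F A'›
  have : Algebra.IsSeparable F B := .of_algHom F A (inclusion (show B ≤ A from hA'))
  exact linearDisjoint_of_finiteDimensional_of_isSeparable (A := B) hF

end LinearDisjoint

theorem tensorProduct_isField_of_separablyClosedIn_general
    {F K : Type*} [Field F] [Field K] [Algebra F K] (hF : separableClosure F K = ⊥)
    (E : Type*) [Field E] [Algebra F E] [Algebra.IsSeparable F E] : IsField (K ⊗[F] E) := by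
  let ι : K →ₐ[F] AlgebraicClosure K := IsScalarTower.toAlgHom F K _
  let σ : E →ₐ[F] AlgebraicClosure K := IsAlgClosed.lift
  have : Algebra.IsSeparable F σ.fieldRange :=
    AlgEquiv.Algebra.isSeparable (AlgEquiv.ofInjectiveField σ)
  have hdisj : ι.fieldRange.LinearDisjoint σ.fieldRange :=
    linearDisjoint_iff'.mpr (Subalgebra.LinearDisjoint.symm (linearDisjoint_of_isSeparable hF))
  exact hdisj.isField_of_isAlgebraic' (.inr inferInstance)

/-- Let `F ⊆ K` be a field extension such that `F` is separably algebraically closed in `K`,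
i.e. every element of `K` that is algebraic over `F` with separable minimal polynomial
already lies in `F`. Then for every finite separable field extension `E/F`, the tensor
product `K ⊗[F] E` is a field. -/
theorem tensorProduct_isField_of_separablyClosedIn
    (F K : Type*) [Field F] [Field K] [Algebra F K]
    (hclosed : ∀ x : K, IsAlgebraic F x → (minpoly F x).Separable →
      ∃ y : F, algebraMap F K y = x) :
    ∀ (E : Type*) [Field E] [Algebra F E], FiniteDimensional F E →
      Algebra.IsSeparable F E → IsField (K ⊗[F] E) := by
  intro E _ _ _ _
  exact tensorProduct_isField_of_separablyClosedIn_general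
    (eq_bot_iff.mpr fun x hx ↦ mem_bot.mpr (hclosed x hx.isIntegral.isAlgebraic hx)) E
end

section
/- There is a unique 𝔽₂-algebra homomorphism τ : P → P satisfying τ(ε̄₁) = ε̄₁ and τ(ε̄_i) = ε̄_i + ε̄₁^{2i−3} for all 2 ≤ i ≤ s, and this τ is an involution, i.e., τ ∘ τ = id. (Well-definedness uses that (ε̄_i + ε̄₁^{2i−3})^{2^{k_i}} = ε̄_i^{2^{k_i}} + ε̄₁^{(2i−3)·2^{k_i}} and that (2i−3)·2^{k_i} ≥ n.) -/
open MvPolynomial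

set_option synthInstance.maxHeartbeats 1000000
set_option maxHeartbeats 1000000

noncomputable section

/-- The ideal `(ε₁ⁿ, ε₂^{2^{k₂}}, …, ε_s^{2^{k_s}})` of `𝔽₂[ε₁,…,ε_s]`, where
`s = n/2 + 1` and the variable of index `i : Fin (n/2+1)` is `ε_{i+1}`. -/
def relIdealP (n : ℕ) (k : ℕ → ℕ) : Ideal (MvPolynomial (Fin (n / 2 + 1)) (ZMod 2)) :=
  Ideal.span (Set.range fun i : Fin (n / 2 + 1) =>
    X i ^ (if (i : ℕ) = 0 then n else 2 ^ k ((i : ℕ) + 1)))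

/-- `P = 𝔽₂[ε₁,…,ε_s]/(ε₁ⁿ, ε₂^{2^{k₂}}, …, ε_s^{2^{k_s}})` with `s = n/2 + 1`. -/
abbrev P (n : ℕ) (k : ℕ → ℕ) : Type :=
  MvPolynomial (Fin (n / 2 + 1)) (ZMod 2) ⧸ relIdealP n k

/-- `ε̄_{i+1}`, the class in `P` of the variable of index `i`. -/
def eps (n : ℕ) (k : ℕ → ℕ) (i : Fin (n / 2 + 1)) : P n k :=
  Ideal.Quotient.mk _ (X i)

/-- The subalgebra `P^τ` of `τ`-invariant elements. -/
def Pfix (n : ℕ) (k : ℕ → ℕ) (τ : P n k →ₐ[ZMod 2] P n k) : Subalgebra (ZMod 2) (P n k) :=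
  AlgHom.equalizer τ (AlgHom.id (ZMod 2) (P n k))

end

/-!
Algebra homomorphisms out of `R[xᵢ]/(xᵢ ^ e i)` correspond to families `zᵢ` with `zᵢ ^ e i = 0`.
In characteristic `p`, if `e i` is a power of `p`, then
`(xᵢ + xₒ ^ d) ^ e i = xᵢ ^ e i + xₒ ^ (d * e i)`, which vanishes as soon as `e o ≤ d * e i`; so
there is a unique endomorphism fixing `xₒ` and adding `xₒ ^ d i` to every other `xᵢ`. Its `j`-th
iterate adds `j • xₒ ^ d i`, which is zero for `j = p`.
-/

theorem add_pow_prime_pow_of_natCast_eq_zero {A : Type*} [CommSemiring A] {p : ℕ}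
    (hp : p.Prime) (hA : (p : A) = 0) (a b : A) (m : ℕ) :
    (a + b) ^ p ^ m = a ^ p ^ m + b ^ p ^ m := by
  obtain ⟨r, hr⟩ := exists_add_pow_prime_pow_eq hp a b m
  simpa only [hA, zero_mul, add_zero] using hr

theorem algHom_pow_apply_of_apply_eq_add {R A : Type*} [CommSemiring R] [Semiring A] [Algebra R A]
    {τ : A →ₐ[R] A} {a b : A} (ha : τ a = a + b) (hb : τ b = b) (j : ℕ) :
    (τ ^ j) a = a + j • b := by
  induction j with
  | zero => simp
  | succ j ih =>
    calc (τ ^ (j + 1)) a = τ ((τ ^ j) a) := by rw [pow_succ', AlgHom.mul_apply]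
      _ = a + b + j • b := by rw [ih, map_add, map_nsmul, ha, hb]
      _ = a + (j + 1) • b := by rw [succ_nsmul', add_assoc]

theorem le_mul_two_pow_of_two_mul_sub_one_lt {n l m : ℕ} (h : 2 * n - 1 < l * 2 ^ (m + 1)) :
    n ≤ l * 2 ^ m := by
  rw [pow_succ, ← mul_assoc] at h
  omega

/-- The truncated polynomial algebra `R[xᵢ]/(xᵢ ^ e i)`. The algebra `P n k` is the case of the
exponents `n, 2^{k₂}, …, 2^{k_s}`. -/
abbrev TruncatedPolynomial {σ : Type*} (R : Type*) [CommRing R] (e : σ → ℕ) : Type _ :=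
  MvPolynomial σ R ⧸ Ideal.span (Set.range fun i => (X i : MvPolynomial σ R) ^ e i)

namespace TruncatedPolynomial

variable {σ R : Type*} [CommRing R] {e : σ → ℕ}

variable (R e) in
/-- The class `xᵢ` of the variable of index `i` in the truncated polynomial algebra. -/
noncomputable def gen (i : σ) : TruncatedPolynomial R e :=
  Ideal.Quotient.mk _ (X i)

theorem gen_pow_eq_zero (i : σ) : gen R e i ^ e i = 0 := by
  rw [gen, ← map_pow, Ideal.Quotient.eq_zero_iff_mem]
  exact Ideal.subset_span ⟨i, rfl⟩

section UniversalProperty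

variable {A : Type*}

theorem algHom_ext [Semiring A] [Algebra R A] {f g : TruncatedPolynomial R e →ₐ[R] A}
    (h : ∀ i, f (gen R e i) = g (gen R e i)) : f = g :=
  Ideal.Quotient.algHom_ext _ (MvPolynomial.algHom_ext h)

theorem existsUnique_algHom [CommSemiring A] [Algebra R A] (z : σ → A) (hz : ∀ i, z i ^ e i = 0) :
    ∃! f : TruncatedPolynomial R e →ₐ[R] A, ∀ i, f (gen R e i) = z i := by
  have span_le_ker : Ideal.span (Set.range fun i => (X i : MvPolynomial σ R) ^ e i) ≤
      RingHom.ker (aeval z : MvPolynomial σ R →ₐ[R] A) := by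
    rw [Ideal.span_le]
    rintro _ ⟨i, rfl⟩
    simpa only [SetLike.mem_coe, RingHom.mem_ker, map_pow, aeval_X] using hz i
  exact ⟨Ideal.Quotient.liftₐ _ (aeval z) fun _ ha => span_le_ker ha, fun i => aeval_X z i,
    fun f hf => algHom_ext fun i => (hf i).trans (aeval_X z i).symm⟩

end UniversalProperty

section Shear

variable {p : ℕ} {o : σ} {d : σ → ℕ}

/-- The endomorphism `τ` is the shear along `xₒ` with exponents `d`: it fixes `xₒ` and sends every
other `xᵢ` to `xᵢ + xₒ ^ d i`. -/
def IsShear (o : σ) (d : σ → ℕ) (τ : TruncatedPolynomial R e →ₐ[R] TruncatedPolynomial R e) :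
    Prop :=
  τ (gen R e o) = gen R e o ∧ ∀ i ≠ o, τ (gen R e i) = gen R e i + gen R e o ^ d i

theorem natCast_eq_zero [CharP R p] : (p : TruncatedPolynomial R e) = 0 := by
  rw [← map_natCast (algebraMap R _), CharP.cast_eq_zero, map_zero]

theorem gen_add_gen_pow_pow_eq_zero [CharP R p] (hp : p.Prime) {i : σ} {l : ℕ}
    (he : ∃ m, e i = p ^ m) (hl : e o ≤ l * e i) : (gen R e i + gen R e o ^ l) ^ e i = 0 := by
  have frobenius : (gen R e i + gen R e o ^ l) ^ e i =
      gen R e i ^ e i + (gen R e o ^ l) ^ e i := by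
    obtain ⟨m, hm⟩ := he
    rw [hm, add_pow_prime_pow_of_natCast_eq_zero hp (natCast_eq_zero (R := R))]
  rw [frobenius, gen_pow_eq_zero, zero_add, ← pow_mul]
  exact pow_eq_zero_of_le hl (gen_pow_eq_zero o)

theorem existsUnique_isShear [CharP R p] (hp : p.Prime) (he : ∀ i ≠ o, ∃ m, e i = p ^ m)
    (hd : ∀ i ≠ o, e o ≤ d i * e i) :
    ∃! τ : TruncatedPolynomial R e →ₐ[R] TruncatedPolynomial R e, IsShear o d τ := by
  classical
  let image : σ → TruncatedPolynomial R e :=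
    Function.update (fun i => gen R e i + gen R e o ^ d i) o (gen R e o)
  have image_pow (i : σ) : image i ^ e i = 0 :=
    (Function.forall_update_iff _ fun i z => z ^ e i = 0).2
      ⟨gen_pow_eq_zero o, fun i hi => gen_add_gen_pow_pow_eq_zero hp (he i hi) (hd i hi)⟩ i
  have isShear_iff (τ : TruncatedPolynomial R e →ₐ[R] TruncatedPolynomial R e) :
      (∀ i, τ (gen R e i) = image i) ↔ IsShear o d τ :=
    Function.forall_update_iff _ fun i z => τ (gen R e i) = z
  simpa only [isShear_iff] using existsUnique_algHom (R := R) image image_pow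

theorem IsShear.pow_eq_one [CharP R p]
    {τ : TruncatedPolynomial R e →ₐ[R] TruncatedPolynomial R e} (hτ : IsShear o d τ) :
    τ ^ p = 1 := by
  obtain ⟨map_base, map_gen⟩ := hτ
  have exists_fixed_shift (i : σ) : ∃ b, τ b = b ∧ τ (gen R e i) = gen R e i + b := by
    rcases eq_or_ne i o with rfl | hi
    · exact ⟨0, map_zero τ, map_base.trans (add_zero _).symm⟩
    · exact ⟨gen R e o ^ d i, by rw [map_pow, map_base], map_gen i hi⟩
  refine algHom_ext fun i => ?_
  obtain ⟨b, hb, hi⟩ := exists_fixed_shift i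
  rw [algHom_pow_apply_of_apply_eq_add hi hb, nsmul_eq_mul, natCast_eq_zero (R := R), zero_mul,
    add_zero, AlgHom.one_apply]

end Shear

end TruncatedPolynomial

open TruncatedPolynomial in
theorem exists_unique_involution_tau_general {p : ℕ} (hp : p.Prime) {σ R : Type*} [CommRing R]
    [CharP R p] (o : σ) (e d : σ → ℕ) (he : ∀ i ≠ o, ∃ m, e i = p ^ m)
    (hd : ∀ i ≠ o, e o ≤ d i * e i) :
    (∃! τ : TruncatedPolynomial R e →ₐ[R] TruncatedPolynomial R e, IsShear o d τ) ∧
      ∀ τ : TruncatedPolynomial R e →ₐ[R] TruncatedPolynomial R e, IsShear o d τ → τ ^ p = 1 :=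
  ⟨existsUnique_isShear hp he hd, fun _ hτ => hτ.pow_eq_one⟩

/-- Fix `n ≥ 2`, `s = n/2 + 1`, and for `2 ≤ i ≤ s` let `k i` be the unique natural number
with `(2i−3)·2^{k i} ≤ 2n−1 < (2i−3)·2^{k i + 1}`. In
`P = 𝔽₂[ε₁,…,ε_s]/(ε₁ⁿ, ε₂^{2^{k₂}}, …, ε_s^{2^{k_s}})` (the variable of index
`i : Fin (n/2+1)` being `ε_{i+1}`), there is a unique `𝔽₂`-algebra homomorphism
`τ : P → P` with `τ(ε̄₁) = ε̄₁` and `τ(ε̄ᵢ) = ε̄ᵢ + ε̄₁^{2i−3}` for `2 ≤ i ≤ s`,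
and this `τ` is an involution, `τ ∘ τ = id`. -/
theorem exists_unique_involution_tau
    (n : ℕ) (hn : 2 ≤ n) (k : ℕ → ℕ)
    (hk : ∀ i : ℕ, 2 ≤ i → i ≤ n / 2 + 1 →
      (2 * i - 3) * 2 ^ k i ≤ 2 * n - 1 ∧ 2 * n - 1 < (2 * i - 3) * 2 ^ (k i + 1)) :
    (∃! τ : P n k →ₐ[ZMod 2] P n k,
      τ (eps n k 0) = eps n k 0 ∧
      ∀ i : Fin (n / 2 + 1), 1 ≤ (i : ℕ) →
        τ (eps n k i) = eps n k i + eps n k 0 ^ (2 * (i : ℕ) - 1)) ∧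
    ∀ τ : P n k →ₐ[ZMod 2] P n k,
      (τ (eps n k 0) = eps n k 0 ∧
        ∀ i : Fin (n / 2 + 1), 1 ≤ (i : ℕ) →
          τ (eps n k i) = eps n k i + eps n k 0 ^ (2 * (i : ℕ) - 1)) →
      τ.comp τ = AlgHom.id (ZMod 2) (P n k) := by
  have truncation (i : Fin (n / 2 + 1)) (hi : i ≠ 0) : n ≤ (2 * (i : ℕ) - 1) * 2 ^ k (i + 1) := by
    have hi' := Fin.val_ne_zero_iff.2 hi
    exact le_mul_two_pow_of_two_mul_sub_one_lt (hk (i + 1) (by omega) (by omega)).2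
  obtain ⟨existsUnique, pow_two_eq_one⟩ := exists_unique_involution_tau_general Nat.prime_two
    (R := ZMod 2) (0 : Fin (n / 2 + 1)) (fun i => if (i : ℕ) = 0 then n else 2 ^ k (i + 1))
    (fun i => 2 * (i : ℕ) - 1) (fun i hi => ⟨k (i + 1), by simp [hi]⟩)
    (fun i hi => by simpa [hi] using truncation i hi)
  simp only [Nat.one_le_iff_ne_zero, Fin.val_ne_zero_iff]
  exact ⟨existsUnique, fun τ hτ => (sq τ).symm.trans (pow_two_eq_one τ hτ)⟩
end

section
/- For every integer m with 1 ≤ m ≤ n, the map id + τ induces a well-defined additive map P/(ε̄₁^m) → P^τ/(ε̄₁^m), where (ε̄₁^m) denotes the ideal generated by ε̄₁^m in P, respectively in P^τ, and the image of this map equals ε̄₁ · (P^τ/(ε̄₁^m)), the set of all multiples of ε̄₁ in the ring P^τ/(ε̄₁^m). -/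
open MvPolynomial

set_option synthInstance.maxHeartbeats 1000000
set_option maxHeartbeats 1000000

/-!
Since `τ` is an involution, the transfer `a ↦ a + τ a` is `R^τ`-linear with values in `R^τ`, so it
induces `R/IR → R^τ/I` for every ideal `I` of `R^τ`, and everything reduces to showing that the
image of the transfer is the ideal `(ε̄₁)` of `P^τ`. It contains `ε̄₁`, the transfer of `ε̄₂`. For
the converse, the elements whose transfer is a multiple in `R^τ` of a fixed `e ∈ R^τ` form a
subalgebra in characteristic two: if `τ a = a + e u` and `τ b = b + e v` with invariant `u` and
`v`, then `ab + τ(ab) = e (ub + av + euv)`, and `τ` moves the second factor by `2euv = 0`. For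
`e = ε̄₁` this subalgebra contains every generator `ε̄ᵢ`, as the transfer of `ε̄ᵢ` is `ε̄₁^{2i-3}`
for `i ≥ 2`.
-/

section Transfer

variable {A R : Type*} [CommRing A] [CommRing R] [Algebra A R] {τ : R →ₐ[A] R}

/-- The subalgebra `R^τ` of invariants of an algebra endomorphism `τ` of `R`. -/
abbrev invariants (τ : R →ₐ[A] R) : Subalgebra A R :=
  AlgHom.equalizer τ (AlgHom.id A R)

/-- The transfer `id + τ : R → R^τ` of an involution `τ`, as an `R^τ`-linear map. -/
def transfer (hinv : Function.Involutive τ) : R →ₗ[invariants τ] invariants τ where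
  toFun a := ⟨a + τ a, by simp [AlgHom.mem_equalizer, hinv a, add_comm]⟩
  map_add' a b := by
    ext
    simp [add_add_add_comm]
  map_smul' u a := by
    ext
    have hu : τ u = u := u.2
    simp [Subalgebra.smul_def, hu, mul_add]

@[simp]
theorem coe_transfer (hinv : Function.Involutive τ) (a : R) : (transfer hinv a : R) = a + τ a :=
  rfl

theorem transfer_mem_of_mem_map (hinv : Function.Involutive τ) {I : Ideal (invariants τ)} {a : R}
    (ha : a ∈ I.map (algebraMap (invariants τ) R)) : transfer hinv a ∈ I := by
  have ha' : a ∈ I • (⊤ : Submodule (invariants τ) R) := by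
    rwa [Ideal.smul_top_eq_map, Submodule.restrictScalars_mem]
  have hmap : transfer hinv a ∈ (I • ⊤ : Submodule (invariants τ) R).map (transfer hinv) :=
    Submodule.mem_map_of_mem ha'
  rw [Submodule.map_smul''] at hmap
  exact Ideal.mul_le_left hmap

/-- The additive map `R/IR → R^τ/I` induced by the transfer. -/
def transferQuotient (hinv : Function.Involutive τ) (I : Ideal (invariants τ)) :
    R ⧸ I.map (algebraMap (invariants τ) R) →+ invariants τ ⧸ I :=
  QuotientAddGroup.map (I.map (algebraMap (invariants τ) R)).toAddSubgroup I.toAddSubgroup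
    (transfer hinv).toAddMonoidHom fun _ => transfer_mem_of_mem_map hinv

theorem transferQuotient_mk (hinv : Function.Involutive τ) (I : Ideal (invariants τ)) (a : R) :
    transferQuotient hinv I (Ideal.Quotient.mk _ a) = Ideal.Quotient.mk I (transfer hinv a) :=
  rfl

theorem range_transferQuotient (hinv : Function.Involutive τ) {e : invariants τ}
    (he : LinearMap.range (transfer hinv) = Ideal.span {e}) (I : Ideal (invariants τ)) :
    Set.range (transferQuotient hinv I) = Set.range (Ideal.Quotient.mk I e * ·) := by
  have hrange : Set.range (transfer hinv) = Set.range (e * ·) := by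
    ext u
    rw [← LinearMap.coe_range, he, SetLike.mem_coe, Ideal.mem_span_singleton]
    exact exists_congr fun _ => eq_comm
  calc Set.range (transferQuotient hinv I)
      = Set.range (transferQuotient hinv I ∘ Ideal.Quotient.mk _) :=
        (Ideal.Quotient.mk_surjective.range_comp _).symm
    _ = Ideal.Quotient.mk I '' Set.range (transfer hinv) :=
        Set.range_comp (Ideal.Quotient.mk I) (transfer hinv)
    _ = Set.range ((Ideal.Quotient.mk I e * ·) ∘ Ideal.Quotient.mk I) := by
        rw [hrange, ← Set.range_comp]
        exact congrArg Set.range (funext fun u => map_mul _ e u)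
    _ = Set.range (Ideal.Quotient.mk I e * ·) := Ideal.Quotient.mk_surjective.range_comp _

end Transfer

section CharTwo

variable {R : Type*} [CommRing R] [Algebra (ZMod 2) R] {τ : R →ₐ[ZMod 2] R}

theorem transfer_eq_iff (hinv : Function.Involutive τ) {a : R} {u : invariants τ} :
    transfer hinv a = u ↔ τ a = a + u := by
  rw [Subtype.ext_iff, coe_transfer, ← eq_neg_add_iff_add_eq, ZModModule.neg_eq_self]

theorem transfer_coe (hinv : Function.Involutive τ) (u : invariants τ) :
    transfer hinv (u : R) = 0 := by
  rw [transfer_eq_iff, ZeroMemClass.coe_zero, add_zero]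
  exact u.2

theorem dvd_transfer_mul (hinv : Function.Involutive τ) {e : invariants τ} {a b : R}
    (ha : e ∣ transfer hinv a) (hb : e ∣ transfer hinv b) : e ∣ transfer hinv (a * b) := by
  obtain ⟨u, hu⟩ := ha
  obtain ⟨v, hv⟩ := hb
  have hτe : τ e = e := e.2
  have hτu : τ u = u := u.2
  have hτv : τ v = v := v.2
  have hτa : τ a = a + e * u := (transfer_eq_iff hinv).mp hu
  have hτb : τ b = b + e * v := (transfer_eq_iff hinv).mp hv
  have hw : u * b + a * v + e * u * v ∈ invariants τ := by
    simp only [AlgHom.mem_equalizer, AlgHom.id_apply, map_add, map_mul, hτa, hτb, hτe, hτu, hτv]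
    linear_combination ZModModule.add_self (e * u * v : R)
  refine ⟨⟨_, hw⟩, Subtype.ext ?_⟩
  simp only [coe_transfer, map_mul, hτa, hτb, Subalgebra.coe_mul]
  linear_combination ZModModule.add_self (a * b)

theorem dvd_transfer_of_adjoin_eq_top (hinv : Function.Involutive τ) {s : Set R}
    (hs : Algebra.adjoin (ZMod 2) s = ⊤) {e : invariants τ} (he : ∀ x ∈ s, e ∣ transfer hinv x)
    (a : R) : e ∣ transfer hinv a := by
  have ha : a ∈ Algebra.adjoin (ZMod 2) s := hs ▸ Algebra.mem_top
  induction ha using Algebra.adjoin_induction with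
  | mem x hx => exact he x hx
  | algebraMap r =>
    have hr : transfer hinv (algebraMap (ZMod 2) R r) = 0 := transfer_coe hinv (algebraMap _ _ r)
    exact hr ▸ dvd_zero e
  | add a b _ _ iha ihb => simpa only [map_add] using dvd_add iha ihb
  | mul a b _ _ iha ihb => exact dvd_transfer_mul hinv iha ihb

theorem range_transfer_eq_span (hinv : Function.Involutive τ) {s : Set R}
    (hs : Algebra.adjoin (ZMod 2) s = ⊤) {e : invariants τ} (he : ∀ x ∈ s, e ∣ transfer hinv x)
    {y : R} (hy : transfer hinv y = e) : LinearMap.range (transfer hinv) = Ideal.span {e} := by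
  apply le_antisymm
  · rintro _ ⟨a, rfl⟩
    exact Ideal.mem_span_singleton.mpr (dvd_transfer_of_adjoin_eq_top hinv hs he a)
  · exact (Ideal.span_singleton_le_iff_mem (LinearMap.range (transfer hinv))).mpr ⟨y, hy⟩

theorem id_add_tau_induced_map_image_general (hinv : Function.Involutive τ) {s : Set R}
    (hs : Algebra.adjoin (ZMod 2) s = ⊤) {e : invariants τ} (he : ∀ x ∈ s, e ∣ transfer hinv x)
    {y : R} (hy : transfer hinv y = e) (I : Ideal (invariants τ)) :
    ∃ Φ : R ⧸ I.map (algebraMap (invariants τ) R) →+ invariants τ ⧸ I,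
      (∀ (a : R) (u : invariants τ), (u : R) = a + τ a →
        Φ (Ideal.Quotient.mk _ a) = Ideal.Quotient.mk I u) ∧
      Set.range Φ = Set.range (Ideal.Quotient.mk I e * ·) := by
  refine ⟨transferQuotient hinv I, fun a u hu => ?_,
    range_transferQuotient hinv (range_transfer_eq_span hinv hs he hy) I⟩
  rw [transferQuotient_mk, show u = transfer hinv a from Subtype.ext hu]

end CharTwo

section Generators

theorem adjoin_range_eps (n : ℕ) (k : ℕ → ℕ) :
    Algebra.adjoin (ZMod 2) (Set.range (eps n k)) = ⊤ := by
  have heps : Set.range (eps n k) = Ideal.Quotient.mkₐ (ZMod 2) (relIdealP n k) '' Set.range X :=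
    Set.range_comp _ _
  rw [heps, ← AlgHom.map_adjoin, MvPolynomial.adjoin_range_X, Algebra.map_top,
    AlgHom.range_eq_top]
  exact Ideal.Quotient.mkₐ_surjective _ _

variable {n : ℕ} {k : ℕ → ℕ} {τ : P n k →ₐ[ZMod 2] P n k}

theorem transfer_eps_eq_pow (hinv : Function.Involutive τ) {e : invariants τ}
    (he : (e : P n k) = eps n k 0) {i : Fin (n / 2 + 1)}
    (hτ : τ (eps n k i) = eps n k i + eps n k 0 ^ (2 * (i : ℕ) - 1)) :
    transfer hinv (eps n k i) = e ^ (2 * (i : ℕ) - 1) := by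
  rw [transfer_eq_iff, hτ, Subalgebra.coe_pow, he]

theorem dvd_transfer_eps (hinv : Function.Involutive τ) {e : invariants τ}
    (he : (e : P n k) = eps n k 0)
    (hτ : ∀ i : Fin (n / 2 + 1), 1 ≤ (i : ℕ) →
      τ (eps n k i) = eps n k i + eps n k 0 ^ (2 * (i : ℕ) - 1)) (i : Fin (n / 2 + 1)) :
    e ∣ transfer hinv (eps n k i) := by
  rcases Nat.eq_zero_or_pos (i : ℕ) with hi | hi
  · obtain rfl : i = 0 := Fin.ext hi
    rw [← he, transfer_coe]
    exact dvd_zero e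
  · rw [transfer_eps_eq_pow hinv he (hτ i hi)]
    exact dvd_pow_self e (by omega)

end Generators

/-- Fix `n ≥ 2`, `s = n/2 + 1`, `k i` as in the context, the algebra
`P = 𝔽₂[ε₁,…,ε_s]/(ε₁ⁿ, ε₂^{2^{k₂}}, …, ε_s^{2^{k_s}})` and the involution `τ` with
`τ(ε̄₁) = ε̄₁`, `τ(ε̄ᵢ) = ε̄ᵢ + ε̄₁^{2i−3}`; `Pfix n k τ` is the invariant subalgebra `P^τ`.
For every `1 ≤ m ≤ n`, the map `id + τ` induces a well-defined additive map
`P/(ε̄₁^m) → P^τ/(ε̄₁^m)` (sending the class of `a` to the class of `a + τ a`), and the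
image of this map equals `ε̄₁ · (P^τ/(ε̄₁^m))`, the set of multiples of `ε̄₁` in
`P^τ/(ε̄₁^m)`. Here `e1 : P^τ` denotes the element with underlying value `ε̄₁`. -/
theorem id_add_tau_induced_map_image
    (n : ℕ) (hn : 2 ≤ n) (k : ℕ → ℕ)
    (hk : ∀ i : ℕ, 2 ≤ i → i ≤ n / 2 + 1 →
      (2 * i - 3) * 2 ^ k i ≤ 2 * n - 1 ∧ 2 * n - 1 < (2 * i - 3) * 2 ^ (k i + 1))
    (τ : P n k →ₐ[ZMod 2] P n k)
    (hτ0 : τ (eps n k 0) = eps n k 0)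
    (hτ : ∀ i : Fin (n / 2 + 1), 1 ≤ (i : ℕ) →
      τ (eps n k i) = eps n k i + eps n k 0 ^ (2 * (i : ℕ) - 1))
    (hτ2 : ∀ a : P n k, τ (τ a) = a)
    (m : ℕ) (hm1 : 1 ≤ m) (hmn : m ≤ n) :
    ∀ e1 : Pfix n k τ, (e1 : P n k) = eps n k 0 →
    ∃ Φ : (P n k ⧸ (Ideal.span {eps n k 0 ^ m} : Ideal (P n k))) →+
        (Pfix n k τ ⧸ (Ideal.span {e1 ^ m} : Ideal (Pfix n k τ))),
      (∀ (a : P n k) (u : Pfix n k τ), (u : P n k) = a + τ a →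
        Φ (Ideal.Quotient.mk (Ideal.span {eps n k 0 ^ m}) a) =
          Ideal.Quotient.mk (Ideal.span {e1 ^ m}) u) ∧
      Set.range Φ =
        Set.range (fun w : Pfix n k τ ⧸ (Ideal.span {e1 ^ m} : Ideal (Pfix n k τ)) =>
          Ideal.Quotient.mk (Ideal.span {e1 ^ m}) e1 * w) := by
  intro e1 he1
  have hy : transfer hτ2 (eps n k ⟨1, by omega⟩) = e1 :=
    (transfer_eps_eq_pow hτ2 he1 (hτ ⟨1, by omega⟩ le_rfl)).trans (pow_one e1)
  have hmap : (Ideal.span {e1 ^ m}).map (algebraMap (Pfix n k τ) (P n k)) =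
      Ideal.span {eps n k 0 ^ m} := by
    rw [Ideal.map_span, Set.image_singleton, map_pow, Subalgebra.algebraMap_apply, he1]
  rw [← hmap]
  exact id_add_tau_induced_map_image_general hτ2 (adjoin_range_eps n k)
    (Set.forall_mem_range.mpr (dvd_transfer_eps hτ2 he1 hτ)) hy (Ideal.span {e1 ^ m})
end

section
/- For every integer m with 1 ≤ m ≤ n, the homomorphism J : P^τ/(ε̄₁^m P^τ) → P/(ε̄₁^m P) induced by the inclusion P^τ ⊆ P is injective on the image of the map id + τ : P/(ε̄₁^m) → P^τ/(ε̄₁^m); that is, if u lies in the image of id + τ and J(u) = 0, then u = 0. -/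
open MvPolynomial

set_option synthInstance.maxHeartbeats 1000000
set_option maxHeartbeats 1000000

/-!
Lift `τ` to the shear `X i ↦ X i + g i (X i₀)` of the polynomial ring and represent `a` by a
polynomial `r` of degree less than `q i` in each variable `X i`, `i ≠ i₀`. The shear does not raise
these degrees, so `r + shear r` is again reduced; being zero modulo `X i₀ ^ m` and the
`X i ^ q i`, it is then already divisible by `X i₀ ^ m` in the polynomial ring. There `X i₀ ^ m` is
regular, and in characteristic two the shear is an involution fixing `X i₀` and `r + shear r`, so it
also fixes the quotient `(r + shear r) / X i₀ ^ m`. The class of this quotient is the required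
`τ`-invariant cofactor; in the truncated ring itself one could not cancel `ε̄₁ ^ m`.
-/

theorem degreeOf_aeval_le {σ R : Type*} [DecidableEq σ] [CommSemiring R]
    (f : σ → MvPolynomial σ R) (i : σ)
    (hf : ∀ j, degreeOf i (f j) ≤ if j = i then 1 else 0) (p : MvPolynomial σ R) :
    degreeOf i (aeval f p) ≤ degreeOf i p := by
  rw [aeval_def, eval₂_eq]
  refine (degreeOf_sum_le i _ _).trans (Finset.sup_le fun d hd => ?_)
  calc degreeOf i (C (coeff d p) * ∏ j ∈ d.support, f j ^ d j)
      ≤ ∑ j ∈ d.support, degreeOf i (f j ^ d j) :=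
        (degreeOf_C_mul_le _ i _).trans (degreeOf_prod_le i _ _)
    _ ≤ ∑ j ∈ d.support, if j = i then d j else 0 := by
        refine Finset.sum_le_sum fun j _ => (degreeOf_pow_le i _ _).trans ?_
        simpa only [mul_ite, mul_one, mul_zero] using Nat.mul_le_mul_left (d j) (hf j)
    _ ≤ d i := by
        rw [Finset.sum_ite_eq']
        split_ifs
        exacts [le_rfl, Nat.zero_le _]
    _ ≤ degreeOf i p := monomial_le_degreeOf i hd

theorem degreeOf_aeval_X_of_ne {σ R : Type*} [CommSemiring R] {i i₀ : σ} (hi : i ≠ i₀)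
    (f : Polynomial R) : degreeOf i (Polynomial.aeval (X i₀ : MvPolynomial σ R) f) = 0 := by
  rw [Polynomial.aeval_eq_sum_range, ← Nat.le_zero]
  refine (degreeOf_sum_le i _ _).trans (Finset.sup_le fun e _ => ?_)
  rw [smul_eq_C_mul]
  exact (degreeOf_C_mul_le _ i _).trans (degreeOf_X_pow_of_ne e hi).le

section Truncation

variable {σ R : Type*} [CommRing R] {i₀ : σ} {q : σ → ℕ}

/-- The ideal `(X i ^ q i : i)` defining the truncated polynomial ring with exponents `q`. -/
noncomputable def truncationIdeal (R : Type*) [CommRing R] (q : σ → ℕ) : Ideal (MvPolynomial σ R) :=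
  Ideal.span (Set.range fun i => X i ^ q i)

/-- The polynomials that are reduced with respect to `X i ^ q i` for all `i ≠ i₀`: every monomial
has exponent less than `q i` at each `i ≠ i₀`, with no condition on the exponent at `i₀`. -/
noncomputable def reducedPolynomials (R : Type*) [CommRing R] (i₀ : σ) (q : σ → ℕ) :
    Submodule R (MvPolynomial σ R) :=
  restrictSupport R {d | ∀ i, i ≠ i₀ → d i < q i}

theorem exists_mem_reducedPolynomials_mk_eq (i₀ : σ)
    (a : MvPolynomial σ R ⧸ truncationIdeal R q) :
    ∃ r ∈ reducedPolynomials R i₀ q, Ideal.Quotient.mk (truncationIdeal R q) r = a := by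
  obtain ⟨p, rfl⟩ := Ideal.Quotient.mk_surjective a
  induction p using MvPolynomial.induction_on' with
  | monomial d c =>
    by_cases hd : ∀ i, i ≠ i₀ → d i < q i
    · exact ⟨monomial d c, (monomial_mem_restrictSupport R).2 (Or.inl hd), rfl⟩
    · push Not at hd
      obtain ⟨i, -, hi⟩ := hd
      have hdvd : (X i ^ q i : MvPolynomial σ R) ∣ monomial d c := by
        rw [X_pow_eq_monomial, monomial_dvd_monomial]
        exact ⟨Or.inr (Finsupp.single_le_iff.2 hi), one_dvd c⟩
      refine ⟨0, zero_mem _, ?_⟩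
      rw [map_zero, eq_comm, Ideal.Quotient.eq_zero_iff_mem]
      exact Ideal.mem_of_dvd _ hdvd (Ideal.subset_span ⟨i, rfl⟩)
  | add p p' hp hp' =>
    obtain ⟨r, hr, hrp⟩ := hp
    obtain ⟨r', hr', hrp'⟩ := hp'
    exact ⟨r + r', add_mem hr hr', by rw [map_add, map_add, hrp, hrp']⟩

theorem X_pow_dvd_of_mem_reducedPolynomials {m : ℕ} (hm : m ≤ q i₀) {p : MvPolynomial σ R}
    (hp : p ∈ reducedPolynomials R i₀ q)
    (hmem : p ∈ Ideal.span {X i₀ ^ m} ⊔ truncationIdeal R q) : X i₀ ^ m ∣ p := by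
  have hspan : Ideal.span {X i₀ ^ m} ⊔ truncationIdeal R q = Ideal.span
      ((fun d => monomial d (1 : R)) ''
        insert (Finsupp.single i₀ m) (Set.range fun i => Finsupp.single i (q i))) := by
    rw [truncationIdeal, ← Ideal.span_insert, Set.image_insert_eq, ← Set.range_comp]
    simp only [X_pow_eq_monomial, Function.comp_def]
  rw [hspan, mem_ideal_span_monomial_image] at hmem
  rw [← Ideal.mem_span_singleton, X_pow_eq_monomial,
    ← Set.image_singleton (f := fun d => monomial d (1 : R)), mem_ideal_span_monomial_image]
  intro d hd
  refine ⟨_, rfl, ?_⟩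
  obtain ⟨_, rfl | ⟨i, rfl⟩, hle⟩ := hmem d hd
  · exact hle
  · rw [Finsupp.single_le_iff] at hle ⊢
    obtain rfl : i = i₀ := by_contra fun hi => (hp hd i hi).not_ge hle
    exact hm.trans hle

end Truncation

section Shear

variable {σ R : Type*} [CommRing R] {i₀ : σ} {q : σ → ℕ} {g : σ → Polynomial R}

/-- The substitution `X i ↦ X i + g i (X i₀)`. It is meant for `g i₀ = 0`, when it fixes `X i₀`;
it then lifts to polynomials an endomorphism of the truncated ring such as `τ`. -/
noncomputable def shear (i₀ : σ) (g : σ → Polynomial R) : MvPolynomial σ R →ₐ[R] MvPolynomial σ R :=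
  aeval fun i => X i + Polynomial.aeval (X i₀) (g i)

theorem shear_X (i₀ : σ) (g : σ → Polynomial R) (i : σ) :
    shear i₀ g (X i) = X i + Polynomial.aeval (X i₀) (g i) :=
  aeval_X _ i

theorem shear_X_self (hg : g i₀ = 0) : shear i₀ g (X i₀) = X i₀ := by
  rw [shear_X, hg, map_zero, add_zero]

theorem shear_shear [CharP R 2] (hg : g i₀ = 0) (p : MvPolynomial σ R) :
    shear i₀ g (shear i₀ g p) = p := by
  suffices h : (shear i₀ g).comp (shear i₀ g) = AlgHom.id R _ from DFunLike.congr_fun h p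
  refine algHom_ext fun i => ?_
  rw [AlgHom.comp_apply, shear_X, map_add, shear_X, ← Polynomial.aeval_algHom_apply,
    shear_X_self hg, add_assoc, CharTwo.add_self_eq_zero, add_zero, AlgHom.id_apply]

theorem degreeOf_shear_le {i : σ} (hi : i ≠ i₀) (p : MvPolynomial σ R) :
    degreeOf i (shear i₀ g p) ≤ degreeOf i p := by
  classical
  cases subsingleton_or_nontrivial R
  · exact (congrArg _ (Subsingleton.elim _ _)).le
  refine degreeOf_aeval_le _ i (fun j => (degreeOf_add_le i _ _).trans ?_) p
  rw [degreeOf_aeval_X_of_ne hi, degreeOf_X, max_eq_left (Nat.zero_le _)]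
  simp only [eq_comm, le_refl]

theorem shear_mem_reducedPolynomials {r : MvPolynomial σ R}
    (hr : r ∈ reducedPolynomials R i₀ q) : shear i₀ g r ∈ reducedPolynomials R i₀ q := by
  rcases eq_or_ne r 0 with rfl | hr0
  · rw [map_zero]
    exact zero_mem _
  obtain ⟨d, hd⟩ := support_nonempty.2 hr0
  intro e he i hi
  have hq : 0 < q i := Nat.zero_lt_of_lt (hr hd i hi)
  calc e i ≤ degreeOf i (shear i₀ g r) := monomial_le_degreeOf i he
    _ ≤ degreeOf i r := degreeOf_shear_le hi r
    _ < q i := (degreeOf_lt_iff hq).2 fun d hd => hr hd i hi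

theorem shear_eq_self_of_X_pow_mul (hg : g i₀ = 0) {m : ℕ} {b : MvPolynomial σ R}
    (h : shear i₀ g (X i₀ ^ m * b) = X i₀ ^ m * b) : shear i₀ g b = b := by
  rw [map_mul, map_pow, shear_X_self hg] at h
  exact (isRegular_X_pow m).left h

theorem exists_shear_eq_self_and_eq_X_pow_mul [CharP R 2] (hg : g i₀ = 0) {m : ℕ} (hm : m ≤ q i₀)
    {r : MvPolynomial σ R} (hr : r ∈ reducedPolynomials R i₀ q)
    (hmem : r + shear i₀ g r ∈ Ideal.span {X i₀ ^ m} ⊔ truncationIdeal R q) :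
    ∃ b, shear i₀ g b = b ∧ r + shear i₀ g r = X i₀ ^ m * b := by
  obtain ⟨b, hb⟩ := X_pow_dvd_of_mem_reducedPolynomials hm
    (add_mem hr (shear_mem_reducedPolynomials hr)) hmem
  refine ⟨b, shear_eq_self_of_X_pow_mul hg (m := m) ?_, hb⟩
  rw [← hb, map_add, shear_shear hg, add_comm]

theorem mk_shear {I : Ideal (MvPolynomial σ R)}
    {τ : (MvPolynomial σ R ⧸ I) →ₐ[R] (MvPolynomial σ R ⧸ I)}
    (hτ : ∀ i, τ (Ideal.Quotient.mk I (X i)) = Ideal.Quotient.mk I (X i) +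
      Polynomial.aeval (Ideal.Quotient.mk I (X i₀)) (g i)) (p : MvPolynomial σ R) :
    Ideal.Quotient.mk I (shear i₀ g p) = τ (Ideal.Quotient.mk I p) := by
  suffices h : (Ideal.Quotient.mkₐ R I).comp (shear i₀ g) = τ.comp (Ideal.Quotient.mkₐ R I) from
    DFunLike.congr_fun h p
  refine algHom_ext fun i => ?_
  simp only [AlgHom.comp_apply, shear_X, map_add, ← Polynomial.aeval_algHom_apply,
    Ideal.Quotient.mkₐ_eq_mk, hτ]

theorem exists_fixed_eq_pow_mul_of_mem_span [CharP R 2] (hg : g i₀ = 0)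
    {τ : (MvPolynomial σ R ⧸ truncationIdeal R q) →ₐ[R] (MvPolynomial σ R ⧸ truncationIdeal R q)}
    (hτ : ∀ i, τ (Ideal.Quotient.mk _ (X i)) = Ideal.Quotient.mk _ (X i) +
      Polynomial.aeval (Ideal.Quotient.mk _ (X i₀)) (g i))
    {m : ℕ} (hm : m ≤ q i₀) {a : MvPolynomial σ R ⧸ truncationIdeal R q}
    (ha : a + τ a ∈ Ideal.span {Ideal.Quotient.mk (truncationIdeal R q) (X i₀) ^ m}) :
    ∃ b, τ b = b ∧ a + τ a = Ideal.Quotient.mk _ (X i₀) ^ m * b := by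
  obtain ⟨r, hr, rfl⟩ := exists_mem_reducedPolynomials_mk_eq i₀ a
  rw [← mk_shear hτ, ← map_add] at ha ⊢
  have hmem : r + shear i₀ g r ∈ Ideal.span {X i₀ ^ m} ⊔ truncationIdeal R q := by
    rwa [← Ideal.mem_quotient_iff_mem_sup, Ideal.map_span, Set.image_singleton, map_pow]
  obtain ⟨b, hfix, hb⟩ := exists_shear_eq_self_and_eq_X_pow_mul hg hm hr hmem
  exact ⟨Ideal.Quotient.mk _ b, by rw [← mk_shear hτ, hfix], by rw [hb, map_mul, map_pow]⟩

end Shear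

theorem inclusion_injective_on_image_id_add_tau_general
    {σ R : Type*} [CommRing R] [CharP R 2] {i₀ : σ} {q : σ → ℕ} {g : σ → Polynomial R}
    {τ : (MvPolynomial σ R ⧸ truncationIdeal R q) →ₐ[R] (MvPolynomial σ R ⧸ truncationIdeal R q)}
    (hτ₀ : τ (Ideal.Quotient.mk _ (X i₀)) = Ideal.Quotient.mk _ (X i₀))
    (hτ : ∀ i, i ≠ i₀ → τ (Ideal.Quotient.mk _ (X i)) = Ideal.Quotient.mk _ (X i) +
      Polynomial.aeval (Ideal.Quotient.mk _ (X i₀)) (g i))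
    {m : ℕ} (hm : m ≤ q i₀) {e u : AlgHom.equalizer τ (AlgHom.id R _)}
    (he : (e : MvPolynomial σ R ⧸ truncationIdeal R q) = Ideal.Quotient.mk _ (X i₀))
    {a : MvPolynomial σ R ⧸ truncationIdeal R q} (hu : u = a + τ a)
    (ha : Ideal.Quotient.mk
      (Ideal.span {Ideal.Quotient.mk (truncationIdeal R q) (X i₀) ^ m}) (a + τ a) = 0) :
    Ideal.Quotient.mk (Ideal.span {e ^ m}) u = 0 := by
  classical
  have hτ' (i : σ) : τ (Ideal.Quotient.mk _ (X i)) = Ideal.Quotient.mk _ (X i) +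
      Polynomial.aeval (Ideal.Quotient.mk _ (X i₀)) (Function.update g i₀ 0 i) := by
    rcases eq_or_ne i i₀ with rfl | hi
    · rw [Function.update_self, map_zero, add_zero, hτ₀]
    · rw [Function.update_of_ne hi, hτ i hi]
  obtain ⟨b, hfix, hb⟩ := exists_fixed_eq_pow_mul_of_mem_span (Function.update_self i₀ 0 g) hτ' hm
    (Ideal.Quotient.eq_zero_iff_mem.1 ha)
  rw [Ideal.Quotient.eq_zero_iff_mem, Ideal.mem_span_singleton]
  refine ⟨⟨b, hfix⟩, Subtype.ext ?_⟩
  rw [hu, hb, MulMemClass.coe_mul, SubmonoidClass.coe_pow, he]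

/-- Fix `n ≥ 2`, `s = n/2 + 1`, `k i` as in the context, the algebra
`P = 𝔽₂[ε₁,…,ε_s]/(ε₁ⁿ, ε₂^{2^{k₂}}, …, ε_s^{2^{k_s}})` and the involution `τ` with
`τ(ε̄₁) = ε̄₁`, `τ(ε̄ᵢ) = ε̄ᵢ + ε̄₁^{2i−3}`; `Pfix n k τ` is the invariant subalgebra `P^τ`.
For every `1 ≤ m ≤ n`, the homomorphism `J : P^τ/(ε̄₁^m P^τ) → P/(ε̄₁^m P)` induced by the
inclusion `P^τ ⊆ P` is injective on the image of the map `id + τ : P/(ε̄₁^m) → P^τ/(ε̄₁^m)`: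
if `u` is the class in `P^τ/(ε̄₁^m)` of an element with value `a + τ a` and its image in
`P/(ε̄₁^m)` is `0`, then `u = 0`. Here `e1 : P^τ` denotes the element with value `ε̄₁`. -/
theorem inclusion_injective_on_image_id_add_tau
    (n : ℕ) (hn : 2 ≤ n) (k : ℕ → ℕ)
    (hk : ∀ i : ℕ, 2 ≤ i → i ≤ n / 2 + 1 →
      (2 * i - 3) * 2 ^ k i ≤ 2 * n - 1 ∧ 2 * n - 1 < (2 * i - 3) * 2 ^ (k i + 1))
    (τ : P n k →ₐ[ZMod 2] P n k)
    (hτ0 : τ (eps n k 0) = eps n k 0)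
    (hτ : ∀ i : Fin (n / 2 + 1), 1 ≤ (i : ℕ) →
      τ (eps n k i) = eps n k i + eps n k 0 ^ (2 * (i : ℕ) - 1))
    (hτ2 : ∀ a : P n k, τ (τ a) = a)
    (m : ℕ) (hm1 : 1 ≤ m) (hmn : m ≤ n) :
    ∀ e1 : Pfix n k τ, (e1 : P n k) = eps n k 0 →
    ∀ (a : P n k) (u : Pfix n k τ), (u : P n k) = a + τ a →
      Ideal.Quotient.mk (Ideal.span {eps n k 0 ^ m} : Ideal (P n k)) (a + τ a) = 0 →
      Ideal.Quotient.mk (Ideal.span {e1 ^ m} : Ideal (Pfix n k τ)) u = 0 := by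
  intro e1 he1 a u hu ha
  exact inclusion_injective_on_image_id_add_tau_general (i₀ := 0)
    (q := fun i : Fin (n / 2 + 1) => if (i : ℕ) = 0 then n else 2 ^ k ((i : ℕ) + 1))
    (g := fun i => Polynomial.X ^ (2 * (i : ℕ) - 1)) hτ0
    (fun i hi => (hτ i (Nat.one_le_iff_ne_zero.2 (Fin.val_ne_zero_iff.2 hi))).trans
      (congrArg _ (Polynomial.aeval_X_pow _).symm))
    hmn he1 hu ha
end

section
/- Suppose n is odd. Then there is an isomorphism of 𝔽₂-algebras P^τ/(ε̄₁) ≅ 𝔽₂[e₂, …, e_s, x]/(e₂^{2^{k₂−1}}, e₃^{2^{k₃}}, …, e_s^{2^{k_s}}, x²), where (ε̄₁) denotes the ideal of P^τ generated by ε̄₁, sending e₂ to the class of ε̄₂² + ε̄₁ε̄₂, e_i to the class of ε̄_i + ε̄₁^{2i−4}ε̄₂ for 3 ≤ i ≤ s, and x to the class of ε̄₁^{n−1}ε̄₂. -/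
/-!
Write `a = ε₁`, `b = ε₂`, so that `τ` is the identity modulo `a` and `τ b = b + a`. Modulo `a`, the
invariants `N = b² + a b` and `ε_i + a ^ (2 i - 4) b` become `ε₂²` and `ε_i`, hence `P / (a)` is
generated by `1` and `b` over their image. If `a ^ i (s + t b + a q)` is invariant, with `s` and `t`
invariant, then applying `τ` gives `a ^ (i + 1) t ∈ (a ^ (i + 2))`, so `a ∣ t` unless `i = n - 1`.
Peeling off powers of `a` in this way shows that `a ^ (n - 1) b` is the only further generator of
`P^τ`, and the case `i = 0` that there are no relations in `P^τ / (a)` besides the listed ones.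

The listed relations hold because iterating `b² = N + a b` gives
`b ^ 2 ^ m = ∑ i < m, a ^ (2 ^ m - 2 ^ (i + 1)) N ^ 2 ^ i + a ^ (2 ^ m - 1) b`, as soon as the last
term disappears. Applying `τ` to `ε_i ^ 2 ^ k_i = 0` yields `n ≤ (2 i - 3) 2 ^ k_i`, and for odd `n`
this inequality is strict, which is what kills that term.
-/

open MvPolynomial

set_option synthInstance.maxHeartbeats 1000000
set_option maxHeartbeats 1000000

noncomputable section

/-- The ideal `(e₂^{2^{k₂−1}}, e₃^{2^{k₃}}, …, e_s^{2^{k_s}}, x²)` of `𝔽₂[e₂,…,e_s,x]`,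
where the variable of index `j < n/2` is `e_{j+2}` and the last variable
(index `n/2`) is `x`. -/
def relIdealOdd (n : ℕ) (k : ℕ → ℕ) : Ideal (MvPolynomial (Fin (n / 2 + 1)) (ZMod 2)) :=
  Ideal.span (Set.range fun j : Fin (n / 2 + 1) =>
    if (j : ℕ) = n / 2 then X j ^ 2
    else if (j : ℕ) = 0 then X j ^ 2 ^ (k 2 - 1)
    else X j ^ 2 ^ k ((j : ℕ) + 2))

end

theorem dvd_map_sub_map_of_dvd_X {σ R A : Type*} [CommSemiring R] [CommRing A] [Algebra R A] {a : A}
    {φ ψ : MvPolynomial σ R →ₐ[R] A} (h : ∀ i, a ∣ φ (X i) - ψ (X i)) (f : MvPolynomial σ R) :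
    a ∣ φ f - ψ f := by
  let π := Ideal.Quotient.mkₐ R (Ideal.span {a})
  have hπ : π.comp φ = π.comp ψ := algHom_ext fun i =>
    Ideal.Quotient.eq.2 (Ideal.mem_span_singleton.2 (h i))
  exact Ideal.mem_span_singleton.1 (Ideal.Quotient.eq.1 (DFunLike.congr_fun hπ f))

section VarPowIdeal

variable {σ ι R : Type*} [CommSemiring R]

/-- The ideal generated by the powers `X i ^ d i` of the variables; both `relIdealP` and
`relIdealOdd` have this form. -/
noncomputable def varPowIdeal (R : Type*) [CommSemiring R] (d : σ → ℕ) : Ideal (MvPolynomial σ R) :=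
  Ideal.span (Set.range fun i => X i ^ d i)

theorem mem_varPowIdeal_iff {d : σ → ℕ} {f : MvPolynomial σ R} :
    f ∈ varPowIdeal R d ↔ ∀ m ∈ f.support, ∃ i, d i ≤ m i := by
  have h : (Set.range fun i => (X i : MvPolynomial σ R) ^ d i) =
      (fun m => monomial m (1 : R)) '' Set.range fun i => Finsupp.single i (d i) := by
    simp only [← Set.range_comp, Function.comp_def, X_pow_eq_monomial]
  rw [varPowIdeal, h, mem_ideal_span_monomial_image]
  simp [Finsupp.single_le_iff]

theorem X_pow_mem_varPowIdeal (d : σ → ℕ) (i : σ) : X i ^ d i ∈ varPowIdeal R d :=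
  Ideal.subset_span ⟨i, rfl⟩

theorem X_pow_mem_varPowIdeal_iff [Nontrivial R] {d : σ → ℕ} {i : σ} (hd : ∀ j ≠ i, d j ≠ 0)
    {m : ℕ} : X i ^ m ∈ varPowIdeal R d ↔ d i ≤ m := by
  rw [mem_varPowIdeal_iff, support_X_pow]
  simp only [Finset.mem_singleton, forall_eq]
  refine ⟨fun ⟨j, hj⟩ => ?_, fun h => ⟨i, by simpa using h⟩⟩
  obtain rfl | hji := eq_or_ne j i
  · simpa using hj
  · exact absurd hj (by simpa [Finsupp.single_eq_of_ne hji] using hd j hji)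

theorem varPowIdeal_sup_span_X_pow [DecidableEq σ] {d : σ → ℕ} {i : σ} {e : ℕ} (he : e ≤ d i) :
    varPowIdeal R d ⊔ Ideal.span {X i ^ e} = varPowIdeal R (Function.update d i e) := by
  apply le_antisymm
  · refine sup_le (Ideal.span_le.2 ?_) (Ideal.span_le.2 (Set.singleton_subset_iff.2 ?_))
    · rintro _ ⟨j, rfl⟩
      refine Ideal.pow_mem_of_pow_mem _ (X_pow_mem_varPowIdeal (Function.update d i e) j) ?_
      obtain rfl | hji := eq_or_ne j i
      · simpa using he
      · simp [hji]
    · simpa using X_pow_mem_varPowIdeal (R := R) (Function.update d i e) i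
  · refine Ideal.span_le.2 ?_
    rintro _ ⟨j, rfl⟩
    obtain rfl | hji := eq_or_ne j i
    · exact Ideal.mem_sup_right (by simp)
    · exact Ideal.mem_sup_left (by simpa [hji] using X_pow_mem_varPowIdeal d j)

theorem mem_varPowIdeal_update_of_X_mul_mem [DecidableEq σ] {d : σ → ℕ} {i : σ}
    {f : MvPolynomial σ R} (hf : X i * f ∈ varPowIdeal R d) :
    f ∈ varPowIdeal R (Function.update d i (d i - 1)) := by
  rw [mem_varPowIdeal_iff] at hf ⊢
  intro m hm
  obtain ⟨j, hj⟩ := hf (Finsupp.single i 1 + m) (by simpa [support_X_mul] using hm)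
  refine ⟨j, ?_⟩
  obtain rfl | hji := eq_or_ne j i
  · simpa [add_comm] using hj
  · simpa [hji] using hj

/-- The substitution `X i ↦ X (e i) ^ w i`, a model of a map that raises some variables to
powers and relabels them. -/
noncomputable def powSubst (R : Type*) [CommSemiring R] (e : σ ≃ ι) (w : σ → ℕ) :
    MvPolynomial σ R →ₐ[R] MvPolynomial ι R :=
  aeval fun i => X (e i) ^ w i

/-- The effect of `powSubst` on exponent vectors. -/
noncomputable def powSubstExponent (e : σ ≃ ι) (w : σ → ℕ) : (σ →₀ ℕ) →ₗ[ℕ] (ι →₀ ℕ) :=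
  Finsupp.linearCombination ℕ fun i => Finsupp.single (e i) (w i)

theorem powSubstExponent_apply (e : σ ≃ ι) (w : σ → ℕ) (m : σ →₀ ℕ) (i : σ) :
    powSubstExponent e w m (e i) = m i * w i := by
  classical
  simp only [powSubstExponent, Finsupp.linearCombination_apply, Finsupp.sum_apply,
    Finsupp.smul_single, smul_eq_mul, Finsupp.single_apply, e.injective.eq_iff]
  simp +contextual

theorem powSubstExponent_injective (e : σ ≃ ι) {w : σ → ℕ} (hw : ∀ i, w i ≠ 0) :
    Function.Injective (powSubstExponent e w) := fun m m' h => Finsupp.ext fun i =>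
  Nat.eq_of_mul_eq_mul_right (Nat.pos_of_ne_zero (hw i)) <| by
    rw [← powSubstExponent_apply e, ← powSubstExponent_apply e, h]

theorem powSubst_X (e : σ ≃ ι) (w : σ → ℕ) (i : σ) : powSubst R e w (X i) = X (e i) ^ w i :=
  aeval_X _ i

theorem powSubst_monomial (e : σ ≃ ι) (w : σ → ℕ) (m : σ →₀ ℕ) (c : R) :
    powSubst R e w (monomial m c) = monomial (powSubstExponent e w m) c := by
  rw [powSubst, aeval_monomial, powSubstExponent, Finsupp.linearCombination_apply,
    monomial_finsupp_sum_index]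
  simp only [X_pow_eq_monomial, monomial_pow, one_pow, algebraMap_eq, Finsupp.smul_single,
    smul_eq_mul]

theorem coeff_powSubst (e : σ ≃ ι) {w : σ → ℕ} (hw : ∀ i, w i ≠ 0) (m : σ →₀ ℕ)
    (f : MvPolynomial σ R) :
    coeff (powSubstExponent e w m) (powSubst R e w f) = coeff m f := by
  classical
  induction f using MvPolynomial.induction_on' with
  | monomial m' c =>
    simp only [powSubst_monomial, coeff_monomial, (powSubstExponent_injective e hw).eq_iff]
  | add p q hp hq => rw [map_add, coeff_add, coeff_add, hp, hq]

theorem mem_varPowIdeal_of_powSubst_mem {e : σ ≃ ι} {w : σ → ℕ} (hw : ∀ i, w i ≠ 0)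
    {d : ι → ℕ} {d' : σ → ℕ} (hd : ∀ i m, d (e i) ≤ m * w i → d' i ≤ m)
    {f : MvPolynomial σ R} (hf : powSubst R e w f ∈ varPowIdeal R d) : f ∈ varPowIdeal R d' := by
  rw [mem_varPowIdeal_iff] at hf ⊢
  intro m hm
  obtain ⟨i, hi⟩ := hf (powSubstExponent e w m) <| by
    rwa [mem_support_iff, coeff_powSubst e hw, ← mem_support_iff]
  obtain ⟨j, rfl⟩ := e.surjective i
  exact ⟨j, hd j _ (by rwa [powSubstExponent_apply] at hi)⟩

theorem exists_eq_powSubst_add_powSubst_mul_X [DecidableEq σ] (e : σ ≃ ι) (i : σ)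
    (p : MvPolynomial ι R) :
    ∃ f g, p = powSubst R e (Function.update 1 i 2) f +
      powSubst R e (Function.update 1 i 2) g * X (e i) := by
  induction p using MvPolynomial.induction_on with
  | C c => exact ⟨C c, 0, by rw [map_zero, zero_mul, add_zero]; exact (AlgHom.commutes _ c).symm⟩
  | add p q hp hq =>
    obtain ⟨f, g, rfl⟩ := hp
    obtain ⟨f', g', rfl⟩ := hq
    exact ⟨f + f', g + g', by simp only [map_add]; ring⟩
  | mul_X p l hp =>
    obtain ⟨f, g, rfl⟩ := hp
    obtain ⟨j, rfl⟩ := e.surjective l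
    obtain rfl | hj := eq_or_ne j i
    · exact ⟨g * X j, f, by simp only [map_mul, powSubst_X, Function.update_self]; ring⟩
    · refine ⟨f * X j, g * X j, ?_⟩
      simp only [map_mul, powSubst_X, Function.update_of_ne hj, Pi.one_apply]
      ring

end VarPowIdeal

section Quotient

variable {σ R : Type*} [CommRing R] {d : σ → ℕ} {i : σ}

theorem mk_X_pow_dvd_mk_iff [DecidableEq σ] {e : ℕ} (he : e ≤ d i)
    {f : MvPolynomial σ R} :
    Ideal.Quotient.mk (varPowIdeal R d) (X i) ^ e ∣ Ideal.Quotient.mk (varPowIdeal R d) f ↔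
      f ∈ varPowIdeal R (Function.update d i e) := by
  rw [← varPowIdeal_sup_span_X_pow he, ← Ideal.mem_span_singleton, ← map_pow,
    ← Set.image_singleton, ← Ideal.map_span, Ideal.mem_quotient_iff_mem_sup, sup_comm]

theorem mk_X_pow_dvd_of_mul_eq_zero
    {p : MvPolynomial σ R ⧸ varPowIdeal R d}
    (hp : Ideal.Quotient.mk (varPowIdeal R d) (X i) * p = 0) :
    Ideal.Quotient.mk (varPowIdeal R d) (X i) ^ (d i - 1) ∣ p := by
  classical
  obtain ⟨f, rfl⟩ := Ideal.Quotient.mk_surjective p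
  rw [← map_mul, Ideal.Quotient.eq_zero_iff_mem] at hp
  exact (mk_X_pow_dvd_mk_iff (Nat.sub_le _ _)).2 (mem_varPowIdeal_update_of_X_mul_mem hp)

end Quotient

section NormPowers

variable {R A : Type*} [CommRing R] [CommRing A] [Algebra R A] [CharP A 2]

/-- Iterating `b ^ 2 = (b ^ 2 + a * b) - a * b`. -/
theorem pow_two_pow_eq_sum_add (a b : A) (m : ℕ) :
    b ^ 2 ^ m = ∑ i ∈ Finset.range m, a ^ (2 ^ m - 2 ^ (i + 1)) * (b ^ 2 + a * b) ^ 2 ^ i +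
      a ^ (2 ^ m - 1) * b := by
  induction m with
  | zero => simp
  | succ m ih =>
    have hsum : ∑ i ∈ Finset.range m, a ^ (2 ^ (m + 1) - 2 ^ (i + 1)) * (b ^ 2 + a * b) ^ 2 ^ i =
        a ^ 2 ^ m *
          ∑ i ∈ Finset.range m, a ^ (2 ^ m - 2 ^ (i + 1)) * (b ^ 2 + a * b) ^ 2 ^ i := by
      rw [Finset.mul_sum]
      refine Finset.sum_congr rfl fun i hi => ?_
      have : 2 ^ (i + 1) ≤ 2 ^ m := Nat.pow_le_pow_right two_pos (Finset.mem_range.1 hi)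
      rw [← mul_assoc, ← pow_add, pow_succ 2 m, mul_two, Nat.add_sub_assoc this]
    have hexp : a ^ (2 ^ (m + 1) - 1) = a ^ 2 ^ m * a ^ (2 ^ m - 1) := by
      rw [← pow_add, pow_succ 2 m, mul_two, Nat.add_sub_assoc Nat.one_le_two_pow]
    have hnorm : (b ^ 2 + a * b) ^ 2 ^ m = b ^ 2 ^ (m + 1) + a ^ 2 ^ m * b ^ 2 ^ m := by
      rw [add_pow_char_pow, ← pow_mul, ← pow_succ', mul_pow]
    rw [Finset.sum_range_succ, hsum, hexp, hnorm, Nat.sub_self, pow_zero]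
    linear_combination a ^ 2 ^ m * ih - a ^ 2 ^ m * b ^ 2 ^ m * CharTwo.two_eq_zero (R := A)

variable {B : Subalgebra R A} {a N : B} {b : A}

theorem pow_mul_pow_two_pow_eq_coe_sum (hN : (N : A) = b ^ 2 + a * b) {d m : ℕ}
    (ha : a ^ (d + (2 ^ m - 1)) = 0) :
    (a : A) ^ d * b ^ 2 ^ m =
      ((a ^ d * ∑ i ∈ Finset.range m, a ^ (2 ^ m - 2 ^ (i + 1)) * N ^ 2 ^ i : B) : A) := by
  have ha' : (a : A) ^ d * (a : A) ^ (2 ^ m - 1) = 0 := by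
    rw [← pow_add]; exact congrArg Subtype.val ha
  rw [pow_two_pow_eq_sum_add (a : A)]
  push_cast
  rw [hN, mul_add, ← mul_assoc, ha', zero_mul, add_zero]

theorem dvd_of_coe_eq_pow_mul_pow_two_pow (hN : (N : A) = b ^ 2 + a * b) {d m : ℕ} (hd : d ≠ 0)
    (ha : a ^ (d + (2 ^ m - 1)) = 0) {u : B} (hu : (u : A) = (a : A) ^ d * b ^ 2 ^ m) :
    a ∣ u := by
  rw [Subtype.ext (hu.trans (pow_mul_pow_two_pow_eq_coe_sum hN ha))]
  exact (dvd_pow_self a hd).mul_right _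

theorem dvd_pow_two_pow_of_pow_two_pow_succ_eq_zero (hN : (N : A) = b ^ 2 + a * b) {m : ℕ}
    (ha : a ^ (2 ^ (m + 1) - 1) = 0) (hb : b ^ 2 ^ (m + 1) = 0) : a ∣ N ^ 2 ^ m := by
  have h := pow_mul_pow_two_pow_eq_coe_sum (d := 0) hN (by rwa [zero_add])
  rw [pow_zero, one_mul, pow_zero, one_mul, hb, eq_comm, ZeroMemClass.coe_eq_zero,
    Finset.sum_range_succ, Nat.sub_self, pow_zero, one_mul] at h
  refine (dvd_add_right (Finset.dvd_sum fun i hi => ?_)).1 (h ▸ dvd_zero a)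
  have : 2 ^ (i + 1) < 2 ^ (m + 1) :=
    Nat.pow_lt_pow_right one_lt_two (Nat.succ_lt_succ (Finset.mem_range.1 hi))
  exact (dvd_pow_self a (Nat.sub_ne_zero_of_lt this)).mul_right _

end NormPowers

/-- The subalgebra of elements fixed by the endomorphism `τ`. -/
abbrev fixedSubalgebra {R A : Type*} [CommSemiring R] [Semiring A] [Algebra R A] (τ : A →ₐ[R] A) :
    Subalgebra R A :=
  AlgHom.equalizer τ (AlgHom.id R A)

/-- `τ` is the identity modulo the invariant element `a` and translates `b` by `a`, where `a`
behaves like the variable of a truncated polynomial ring of height `n`: its `n`-th power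
vanishes and its annihilator is generated by `a ^ (n - 1)`. -/
structure IsTruncatedTranslation {R A : Type*} [CommRing R] [CommRing A] [Algebra R A]
    (τ : A →ₐ[R] A) (a : fixedSubalgebra τ) (b : A) (n : ℕ) : Prop where
  map_eq_add : τ b = b + a
  dvd_map_sub (p : A) : (a : A) ∣ τ p - p
  pow_eq_zero : a ^ n = 0
  pow_dvd_of_mul_eq_zero {p : A} : a * p = 0 → (a : A) ^ (n - 1) ∣ p

namespace IsTruncatedTranslation

variable {R A C : Type*} [CommRing R] [CommRing A] [Algebra R A] [CommRing C] [Algebra R C]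
  {τ : A →ₐ[R] A} {a : fixedSubalgebra τ} {b : A} {n : ℕ}

theorem coe_pow_eq_zero (h : IsTruncatedTranslation τ a b n) : (a : A) ^ n = 0 :=
  congrArg Subtype.val h.pow_eq_zero

theorem pow_dvd_of_pow_mul_eq_zero (h : IsTruncatedTranslation τ a b n) {i : ℕ} (hi : i ≤ n)
    {p : A} (hp : (a : A) ^ i * p = 0) : (a : A) ^ (n - i) ∣ p := by
  induction i generalizing p with
  | zero =>
    rw [pow_zero, one_mul] at hp
    exact hp ▸ dvd_zero _
  | succ i ih =>
    obtain ⟨q, hq⟩ := h.pow_dvd_of_mul_eq_zero (p := (a : A) ^ i * p) (by rw [← hp]; ring)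
    have hsub : (a : A) ^ i * (p - (a : A) ^ (n - (i + 1)) * q) = 0 := by
      rw [mul_sub, hq, ← mul_assoc, ← pow_add, show i + (n - (i + 1)) = n - 1 by omega, sub_self]
    have hdvd : (a : A) ^ (n - (i + 1)) ∣ p - (a : A) ^ (n - (i + 1)) * q :=
      (pow_dvd_pow _ (by omega)).trans (ih (by omega) hsub)
    exact (dvd_sub_left (dvd_mul_right _ _)).1 hdvd

theorem dvd_of_pow_succ_dvd_pow_mul (h : IsTruncatedTranslation τ a b n) {i : ℕ} (hi : i < n)
    {p : A} (hp : (a : A) ^ (i + 1) ∣ (a : A) ^ i * p) : (a : A) ∣ p := by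
  obtain ⟨q, hq⟩ := hp
  have hdvd : (a : A) ∣ p - a * q := (dvd_pow_self _ (by omega)).trans <|
    h.pow_dvd_of_pow_mul_eq_zero hi.le (by rw [mul_sub, hq]; ring)
  exact (dvd_sub_left (dvd_mul_right _ _)).1 hdvd

theorem dvd_of_pow_mul_add_mem_fixed (h : IsTruncatedTranslation τ a b n) {i : ℕ}
    (hi : i + 1 < n) (s t : fixedSubalgebra τ) (q : A)
    (hfix : (a : A) ^ i * (s + t * b + a * q) ∈ fixedSubalgebra τ) : (a : A) ∣ t := by
  obtain ⟨r, hr⟩ := h.dvd_map_sub q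
  have ha : τ a = a := a.2
  have hs : τ s = s := s.2
  have ht : τ t = t := t.2
  have hfix' : τ ((a : A) ^ i * (s + t * b + a * q)) = (a : A) ^ i * (s + t * b + a * q) := hfix
  simp only [map_add, map_mul, map_pow, ha, hs, ht, h.map_eq_add] at hfix'
  refine h.dvd_of_pow_succ_dvd_pow_mul hi ⟨-r, ?_⟩
  linear_combination hfix' - (a : A) ^ (i + 1) * hr

/-- Descending induction on the power of `a` dividing an invariant element. -/
theorem eq_top_of_mem (h : IsTruncatedTranslation τ a b n) {S : Subalgebra R (fixedSubalgebra τ)}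
    (haS : a ∈ S) {x : fixedSubalgebra τ} (hx : (x : A) = (a : A) ^ (n - 1) * b) (hxS : x ∈ S)
    (hgen : ∀ p : A, ∃ s ∈ S, ∃ t ∈ S, (a : A) ∣ p - (s + t * b)) : S = ⊤ := by
  suffices H : ∀ i ≤ n, ∀ u : fixedSubalgebra τ, (a : A) ^ i ∣ u → u ∈ S from
    eq_top_iff.2 fun u _ => H 0 (Nat.zero_le n) u (by simp)
  intro i hi
  induction hi using Nat.decreasingInduction with
  | self =>
    rintro u hu
    rw [h.coe_pow_eq_zero, zero_dvd_iff, ZeroMemClass.coe_eq_zero] at hu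
    exact hu ▸ zero_mem S
  | of_succ i hi ih =>
    rintro u ⟨p, hp⟩
    obtain ⟨s, hs, t, ht, q, hq⟩ := hgen p
    obtain rfl | hi' := Nat.eq_or_lt_of_le (Nat.succ_le_of_lt hi)
    · have hu : u = a ^ i * s + t * x := Subtype.ext <| by
        push_cast
        rw [hx, hp, Nat.succ_sub_one]
        linear_combination (a : A) ^ i * hq + q * (pow_succ (a : A) i).symm.trans h.coe_pow_eq_zero
      exact hu ▸ add_mem (mul_mem (pow_mem haS i) hs) (mul_mem ht hxS)
    · have hpq : p = s + t * b + a * q := by linear_combination hq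
      obtain ⟨t', ht'⟩ := h.dvd_of_pow_mul_add_mem_fixed hi' s t q (by rw [← hpq, ← hp]; exact u.2)
      have hsub : u - a ^ i * s ∈ S := ih _ ⟨t' * b + q, by
        push_cast
        rw [hp, hpq, ht']
        ring⟩
      simpa only [sub_add_cancel] using add_mem hsub (mul_mem (pow_mem haS i) hs)

theorem surjective_mkₐ_comp (h : IsTruncatedTranslation τ a b n)
    {φ : C →ₐ[R] fixedSubalgebra τ} {x : C} (hx : (φ x : A) = (a : A) ^ (n - 1) * b)
    (hgen : ∀ p : A, ∃ f g, (a : A) ∣ p - (φ f + φ g * b)) :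
    Function.Surjective ((Ideal.Quotient.mkₐ R (Ideal.span {a})).comp φ) := by
  let π := Ideal.Quotient.mkₐ R (Ideal.span {a})
  let S := (π.comp φ).range.comap π
  have hφS (f : C) : φ f ∈ S := ⟨f, rfl⟩
  have haS : a ∈ S :=
    ⟨0, (map_zero _).trans ((Ideal.Quotient.eq_zero_iff_dvd a a).2 dvd_rfl).symm⟩
  have hS : S = ⊤ := h.eq_top_of_mem haS hx (hφS x) fun p =>
    let ⟨f, g, hfg⟩ := hgen p
    ⟨φ f, hφS f, φ g, hφS g, hfg⟩
  intro q
  obtain ⟨u, rfl⟩ := Ideal.Quotient.mk_surjective q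
  exact (hS ▸ Algebra.mem_top : u ∈ S)

theorem dvd_of_dvd_mul (h : IsTruncatedTranslation τ a b n) (hn : 2 ≤ n)
    {t x : fixedSubalgebra τ} (hx : (x : A) = (a : A) ^ (n - 1) * b) (htx : a ∣ t * x) :
    (a : A) ∣ t := by
  obtain ⟨m, rfl⟩ := Nat.exists_eq_add_of_le' hn
  obtain ⟨v, hv⟩ := htx
  have hv : (t : A) * x = a * v := congrArg Subtype.val hv
  rw [hx, Nat.add_sub_assoc one_le_two] at hv
  obtain ⟨q, hq⟩ := h.pow_dvd_of_mul_eq_zero (p := v - (a : A) ^ m * t * b)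
    (by linear_combination -hv)
  rw [Nat.add_sub_assoc one_le_two] at hq
  refine h.dvd_of_pow_mul_add_mem_fixed (Nat.lt_succ_self _) 0 t q ?_
  convert v.2 using 1
  push_cast
  linear_combination -hq

theorem ker_mkₐ_comp_eq (h : IsTruncatedTranslation τ a b n) (hn : 2 ≤ n)
    {φ : C →ₐ[R] fixedSubalgebra τ} {x : C} (hx : (φ x : A) = (a : A) ^ (n - 1) * b)
    {I : Ideal C} (hI : ∀ f ∈ I, a ∣ φ f) (hxI : x ^ 2 ∈ I)
    (hmem : ∀ f, (a : A) ∣ φ f → f ∈ I ⊔ Ideal.span {x}) :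
    RingHom.ker ((Ideal.Quotient.mkₐ R (Ideal.span {a})).comp φ) = I := by
  have hker (f : C) :
      f ∈ RingHom.ker ((Ideal.Quotient.mkₐ R (Ideal.span {a})).comp φ) ↔ a ∣ φ f :=
    Ideal.Quotient.eq_zero_iff_dvd a (φ f)
  have hsplit {f : C} (hf : (a : A) ∣ φ f) : ∃ g, ∃ r ∈ I, g * x + r = f :=
    Ideal.mem_span_singleton_sup.1 (sup_comm I _ ▸ hmem f hf)
  refine le_antisymm (fun f hf => ?_) fun f hf => (hker f).2 (hI f hf)
  rw [hker] at hf
  obtain ⟨g, r, hr, rfl⟩ := hsplit (map_dvd (fixedSubalgebra τ).val hf)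
  rw [map_add, dvd_add_left (hI r hr), map_mul] at hf
  obtain ⟨g', r', hr', rfl⟩ := hsplit (h.dvd_of_dvd_mul hn hx hf)
  rw [add_mul, mul_assoc, ← pow_two]
  exact add_mem (add_mem (I.mul_mem_left g' hxI) (I.mul_mem_right x hr')) hr

/-- The hypotheses `hgen` and `hmem` say that `A ⧸ (a)` is generated by `1` and `b` over the image
of `φ`, and that this image is `C ⧸ (I + (x))`. -/
theorem exists_quotient_algEquiv (h : IsTruncatedTranslation τ a b n) (hn : 2 ≤ n)
    {φ : C →ₐ[R] fixedSubalgebra τ} {x : C} (hx : (φ x : A) = (a : A) ^ (n - 1) * b)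
    {I : Ideal C} (hI : ∀ f ∈ I, a ∣ φ f) (hxI : x ^ 2 ∈ I)
    (hmem : ∀ f, (a : A) ∣ φ f → f ∈ I ⊔ Ideal.span {x})
    (hgen : ∀ p : A, ∃ f g, (a : A) ∣ p - (φ f + φ g * b)) :
    ∃ iso : (C ⧸ I) ≃ₐ[R] (fixedSubalgebra τ ⧸ (Ideal.span {a} : Ideal (fixedSubalgebra τ))),
      ∀ f, iso (Ideal.Quotient.mk I f) = Ideal.Quotient.mk (Ideal.span {a}) (φ f) :=
  ⟨(Ideal.quotientEquivAlgOfEq R (h.ker_mkₐ_comp_eq hn hx hI hxI hmem).symm).trans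
    (Ideal.quotientKerAlgEquivOfSurjective (h.surjective_mkₐ_comp hx hgen)), fun _ => rfl⟩

end IsTruncatedTranslation

section Generators

variable {n : ℕ} {k : ℕ → ℕ}

/-- The exponents of the generators of `relIdealP n k`, written so that
`relIdealP n k = varPowIdeal _ (expP n k)` holds definitionally. -/
def expP (n : ℕ) (k : ℕ → ℕ) (i : Fin (n / 2 + 1)) : ℕ :=
  if (i : ℕ) = 0 then n else 2 ^ k (i + 1)

theorem expP_succ (i : Fin (n / 2)) : expP n k i.succ = 2 ^ k (i + 2) := rfl

/-- The exponents of the generators of `relIdealOdd n k`. -/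
def expOdd (n : ℕ) (k : ℕ → ℕ) : Fin (n / 2 + 1) → ℕ :=
  Fin.snoc (α := fun _ => ℕ)
    (fun i : Fin (n / 2) => if (i : ℕ) = 0 then 2 ^ (k 2 - 1) else 2 ^ k (i + 2)) 2

theorem expOdd_last : expOdd n k (Fin.last _) = 2 := Fin.snoc_last _ _

theorem expOdd_castSucc (i : Fin (n / 2)) :
    expOdd n k i.castSucc = if (i : ℕ) = 0 then 2 ^ (k 2 - 1) else 2 ^ k (i + 2) :=
  Fin.snoc_castSucc _ _ _

theorem relIdealOdd_eq_varPowIdeal : relIdealOdd n k = varPowIdeal (ZMod 2) (expOdd n k) := by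
  rw [relIdealOdd, varPowIdeal]
  congr 2 with j : 1
  cases j using Fin.lastCases with
  | last => simp [expOdd_last]
  | cast i => simp [expOdd_castSucc, i.2.ne, apply_ite (X i.castSucc ^ ·)]

theorem eps_zero_pow_eq_zero_iff {m : ℕ} : eps n k 0 ^ m = 0 ↔ n ≤ m := by
  rw [eps, ← map_pow, Ideal.Quotient.eq_zero_iff_mem]
  refine X_pow_mem_varPowIdeal_iff (d := expP n k) fun j hj => ?_
  obtain ⟨i, rfl⟩ := Fin.exists_succ_eq.2 hj
  exact expP_succ (k := k) i ▸ pow_ne_zero _ two_ne_zero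

theorem eps_succ_pow_eq_zero (i : Fin (n / 2)) : eps n k i.succ ^ 2 ^ k (i + 2) = 0 := by
  rw [eps, ← map_pow, Ideal.Quotient.eq_zero_iff_mem]
  exact X_pow_mem_varPowIdeal (expP n k) i.succ

theorem nontrivial_P (hn : n ≠ 0) : Nontrivial (P n k) :=
  ⟨eps n k 0 ^ 0, 0, fun h => hn (Nat.le_zero.1 (eps_zero_pow_eq_zero_iff.1 h))⟩

theorem charP_P (hn : n ≠ 0) : CharP (P n k) 2 :=
  have := nontrivial_P (k := k) hn
  charP_of_injective_algebraMap (algebraMap (ZMod 2) (P n k)).injective 2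

theorem fin_succ_eq_one {m : ℕ} {i : Fin m} (hi : (i : ℕ) = 0) : i.succ = 1 := by
  have := i.2
  ext
  rw [Fin.val_succ, hi, Fin.val_one', Nat.mod_eq_of_lt (by omega)]

/-- The invariants `ε₂² + ε₁ ε₂`, `ε_i + ε₁ ^ (2 * i - 4) ε₂` for `3 ≤ i ≤ s` and
`ε₁ ^ (n - 1) ε₂`, indexed like the variables `e₂`, …, `e_s`, `x` of `relIdealOdd`. -/
noncomputable def invGen (n : ℕ) (k : ℕ → ℕ) : Fin (n / 2 + 1) → P n k :=
  Fin.snoc (α := fun _ => P n k)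
    (fun i : Fin (n / 2) => if (i : ℕ) = 0 then eps n k 1 ^ 2 + eps n k 0 * eps n k 1
      else eps n k i.succ + eps n k 0 ^ (2 * (i : ℕ)) * eps n k 1)
    (eps n k 0 ^ (n - 1) * eps n k 1)

theorem invGen_last : invGen n k (Fin.last _) = eps n k 0 ^ (n - 1) * eps n k 1 :=
  Fin.snoc_last _ _

theorem invGen_castSucc_of_eq_zero {i : Fin (n / 2)} (hi : (i : ℕ) = 0) :
    invGen n k i.castSucc = eps n k 1 ^ 2 + eps n k 0 * eps n k 1 :=
  (Fin.snoc_castSucc _ _ _).trans (if_pos hi)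

theorem invGen_castSucc_of_ne_zero {i : Fin (n / 2)} (hi : (i : ℕ) ≠ 0) :
    invGen n k i.castSucc = eps n k i.succ + eps n k 0 ^ (2 * (i : ℕ)) * eps n k 1 :=
  (Fin.snoc_castSucc _ _ _).trans (if_neg hi)

/-- The reduction of `IsEpsShift.invHom` modulo `ε₁`, lifted to polynomials: `e₂ ↦ ε₂²` and
`e_i ↦ ε_i` for `3 ≤ i`. Cyclic addition sends `x` to `ε₁`, which is `0` modulo `ε₁`. -/
noncomputable def invLead (n : ℕ) :
    MvPolynomial (Fin (n / 2 + 1)) (ZMod 2) →ₐ[ZMod 2] MvPolynomial (Fin (n / 2 + 1)) (ZMod 2) :=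
  powSubst (ZMod 2) (Equiv.addRight 1) (Function.update 1 0 2)

theorem invLead_X_last (hn : 2 ≤ n) : invLead n (X (Fin.last _)) = X 0 := by
  have h0 : Fin.last (n / 2) ≠ 0 := Fin.ne_of_val_ne (by simp; omega)
  simp [invLead, powSubst_X, h0]

theorem invLead_X_castSucc (i : Fin (n / 2)) :
    invLead n (X i.castSucc) = X i.succ ^ if (i : ℕ) = 0 then 2 else 1 := by
  simp [invLead, powSubst_X, Function.update_apply, Fin.ext_iff]

theorem exists_eq_invLead_add_invLead_mul_X (p : MvPolynomial (Fin (n / 2 + 1)) (ZMod 2)) :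
    ∃ f g, p = invLead n f + invLead n g * X 1 := by
  simpa [invLead] using exists_eq_powSubst_add_powSubst_mul_X (Equiv.addRight 1) 0 p

theorem update_expOdd_le (j : Fin (n / 2 + 1)) (m : ℕ)
    (hm : Function.update (expP n k) 0 1 (Equiv.addRight 1 j) ≤
      m * Function.update (1 : Fin (n / 2 + 1) → ℕ) 0 2 j) :
    Function.update (expOdd n k) (Fin.last _) 1 j ≤ m := by
  cases j using Fin.lastCases with
  | last =>
    rw [Function.update_self, Nat.one_le_iff_ne_zero]
    rintro rfl
    simp at hm
  | cast i =>
    simp only [Equiv.coe_addRight, Fin.coeSucc_eq_succ, Function.update_of_ne (Fin.succ_ne_zero i),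
      expP_succ] at hm
    rw [Function.update_of_ne (Fin.castSucc_ne_last i), expOdd_castSucc]
    split_ifs with hi
    · have hi' : i.castSucc = 0 := Fin.ext hi
      rw [hi', Function.update_self, hi, zero_add] at hm
      cases hk : k 2 <;> simp only [hk, pow_succ, Nat.add_sub_cancel] at hm ⊢ <;> omega
    · have hi' : i.castSucc ≠ 0 := Fin.ne_of_val_ne hi
      rwa [Function.update_of_ne hi', Pi.one_apply, mul_one] at hm

theorem mem_of_eps_zero_dvd_mk_invLead (hn : n ≠ 0)
    {f : MvPolynomial (Fin (n / 2 + 1)) (ZMod 2)}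
    (hf : eps n k 0 ∣ Ideal.Quotient.mk (relIdealP n k) (invLead n f)) :
    f ∈ relIdealOdd n k ⊔ Ideal.span {X (Fin.last _)} := by
  have hlead : invLead n f ∈ varPowIdeal (ZMod 2) (Function.update (expP n k) 0 1) :=
    (mk_X_pow_dvd_mk_iff (d := expP n k) (i := 0) (Nat.one_le_iff_ne_zero.2 hn)).1
      (by rwa [pow_one])
  rw [relIdealOdd_eq_varPowIdeal, ← pow_one (X (Fin.last _)),
    varPowIdeal_sup_span_X_pow (expOdd_last.symm ▸ one_le_two)]
  refine mem_varPowIdeal_of_powSubst_mem (fun j => ?_) update_expOdd_le hlead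
  simp only [Function.update_apply, Pi.one_apply]
  split_ifs <;> decide

/-- `τ` is the involution of `P`; the variable `ε_{i+2}` has index `i.succ`. -/
structure IsEpsShift (τ : P n k →ₐ[ZMod 2] P n k) : Prop where
  map_zero : τ (eps n k 0) = eps n k 0
  map_succ (i : Fin (n / 2)) : τ (eps n k i.succ) = eps n k i.succ + eps n k 0 ^ (2 * (i : ℕ) + 1)

namespace IsEpsShift

variable {τ : P n k →ₐ[ZMod 2] P n k}

theorem map_one (h : IsEpsShift τ) (hn : 2 ≤ n) : τ (eps n k 1) = eps n k 1 + eps n k 0 := by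
  have h0 : (⟨0, by omega⟩ : Fin (n / 2)).succ = 1 := fin_succ_eq_one rfl
  simpa [h0] using h.map_succ ⟨0, by omega⟩

theorem dvd_map_sub (h : IsEpsShift τ) (p : P n k) : eps n k 0 ∣ τ p - p := by
  obtain ⟨f, rfl⟩ := Ideal.Quotient.mk_surjective p
  let π := Ideal.Quotient.mkₐ (ZMod 2) (relIdealP n k)
  refine dvd_map_sub_map_of_dvd_X (φ := τ.comp π) (ψ := π) (fun i => ?_) f
  change eps n k 0 ∣ τ (eps n k i) - eps n k i
  cases i using Fin.cases with
  | zero => rw [h.map_zero, sub_self]; exact dvd_zero _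
  | succ i =>
    rw [h.map_succ, add_sub_cancel_left]
    exact dvd_pow_self _ (Nat.succ_ne_zero _)

theorem isTruncatedTranslation (h : IsEpsShift τ) (hn : 2 ≤ n) {e1 : fixedSubalgebra τ}
    (he1 : (e1 : P n k) = eps n k 0) : IsTruncatedTranslation τ e1 (eps n k 1) n where
  map_eq_add := he1 ▸ h.map_one hn
  dvd_map_sub p := he1 ▸ h.dvd_map_sub p
  pow_eq_zero := Subtype.ext <| by
    push_cast
    rw [he1, eps_zero_pow_eq_zero_iff]
  pow_dvd_of_mul_eq_zero hp := by
    rw [he1] at hp ⊢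
    exact mk_X_pow_dvd_of_mul_eq_zero (d := expP n k) (i := 0) hp

/-- Apply `τ` to the relation `ε_{i+2} ^ 2 ^ k_{i+2} = 0`. -/
theorem le_mul_two_pow (h : IsEpsShift τ) (i : Fin (n / 2)) :
    n ≤ (2 * i + 1) * 2 ^ k (i + 2) := by
  have := charP_P (n := n) (k := k) (by have := i.2; omega)
  rw [← eps_zero_pow_eq_zero_iff (k := k), pow_mul]
  have hτ := congrArg τ (eps_succ_pow_eq_zero (k := k) i)
  rwa [map_pow, h.map_succ, add_pow_char_pow, eps_succ_pow_eq_zero, zero_add, _root_.map_zero]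
    at hτ

theorem k_ne_zero (h : IsEpsShift τ) (hodd : Odd n) (i : Fin (n / 2)) : k (i + 2) ≠ 0 := by
  obtain ⟨m, rfl⟩ := hodd
  have hi := i.2
  have hle := h.le_mul_two_pow i
  intro hk
  rw [hk] at hle
  omega

theorem lt_mul_two_pow (h : IsEpsShift τ) (hodd : Odd n) (i : Fin (n / 2)) :
    n < (2 * i + 1) * 2 ^ k (i + 2) := by
  refine (h.le_mul_two_pow i).lt_of_ne fun heq => ?_
  have heven : Even (2 ^ k (i + 2)) := even_two.pow_of_ne_zero (h.k_ne_zero hodd i)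
  exact Nat.not_even_iff_odd.2 hodd (heq ▸ heven.mul_left _)

theorem invGen_mem (h : IsEpsShift τ) (hn : 2 ≤ n)
    (j : Fin (n / 2 + 1)) : invGen n k j ∈ fixedSubalgebra τ := by
  have := charP_P (n := n) (k := k) (by omega)
  change τ (invGen n k j) = invGen n k j
  cases j using Fin.lastCases with
  | last =>
    have hpow : eps n k 0 ^ (n - 1) * eps n k 0 = 0 := by
      rw [← pow_succ, eps_zero_pow_eq_zero_iff, Nat.sub_add_cancel (by omega)]
    simp only [invGen_last, map_mul, map_pow, h.map_zero, h.map_one hn, mul_add, hpow, add_zero]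
  | cast i =>
    by_cases hi : (i : ℕ) = 0
    · simp only [invGen_castSucc_of_eq_zero hi, map_add, map_mul, map_pow, h.map_zero,
        h.map_one hn]
      linear_combination (eps n k 0 * eps n k 1 + eps n k 0 ^ 2) *
        CharTwo.two_eq_zero (R := P n k)
    · simp only [invGen_castSucc_of_ne_zero hi, map_add, map_mul, map_pow, h.map_zero,
        h.map_one hn, h.map_succ]
      linear_combination eps n k 0 ^ (2 * (i : ℕ) + 1) * CharTwo.two_eq_zero (R := P n k)

/-- The homomorphism `𝔽₂[e₂, …, e_s, x] → P^τ` sending the variables to `invGen n k`. -/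
noncomputable def invHom (h : IsEpsShift τ)
    (hn : 2 ≤ n) : MvPolynomial (Fin (n / 2 + 1)) (ZMod 2) →ₐ[ZMod 2] fixedSubalgebra τ :=
  aeval fun j => ⟨invGen n k j, h.invGen_mem hn j⟩

theorem invHom_X (h : IsEpsShift τ) (hn : 2 ≤ n) (j : Fin (n / 2 + 1)) :
    (h.invHom hn (X j) : P n k) = invGen n k j :=
  congrArg Subtype.val (aeval_X _ j)

theorem eps_zero_dvd_invHom_sub (h : IsEpsShift τ) (hn : 2 ≤ n)
    (f : MvPolynomial (Fin (n / 2 + 1)) (ZMod 2)) :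
    eps n k 0 ∣ (h.invHom hn f : P n k) - Ideal.Quotient.mk (relIdealP n k) (invLead n f) := by
  refine dvd_map_sub_map_of_dvd_X (φ := (fixedSubalgebra τ).val.comp (h.invHom hn))
    (ψ := (Ideal.Quotient.mkₐ (ZMod 2) (relIdealP n k)).comp (invLead n)) (fun j => ?_) f
  change eps n k 0 ∣ (h.invHom hn (X j) : P n k) - Ideal.Quotient.mk _ (invLead n (X j))
  rw [invHom_X]
  cases j using Fin.lastCases with
  | last =>
    rw [invGen_last, invLead_X_last hn]
    exact dvd_sub ((dvd_pow_self _ (by omega)).mul_right _) dvd_rfl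
  | cast i =>
    rw [invLead_X_castSucc, map_pow]
    by_cases hi : (i : ℕ) = 0
    · rw [invGen_castSucc_of_eq_zero hi, if_pos hi, fin_succ_eq_one hi]
      exact ⟨eps n k 1, add_sub_cancel_left _ _⟩
    · rw [invGen_castSucc_of_ne_zero hi, if_neg hi, pow_one]
      exact (add_sub_cancel_left (eps n k i.succ) _).symm ▸
        (dvd_pow_self _ (by omega)).mul_right _

theorem mem_of_eps_zero_dvd_invHom (h : IsEpsShift τ) (hn : 2 ≤ n)
    {f : MvPolynomial (Fin (n / 2 + 1)) (ZMod 2)} (hf : eps n k 0 ∣ (h.invHom hn f : P n k)) :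
    f ∈ relIdealOdd n k ⊔ Ideal.span {X (Fin.last _)} :=
  mem_of_eps_zero_dvd_mk_invLead (by omega)
    ((dvd_sub_right hf).1 (h.eps_zero_dvd_invHom_sub hn f))

theorem exists_eps_zero_dvd_sub (h : IsEpsShift τ) (hn : 2 ≤ n) (p : P n k) :
    ∃ f g, eps n k 0 ∣ p - (h.invHom hn f + h.invHom hn g * eps n k 1) := by
  obtain ⟨p, rfl⟩ := Ideal.Quotient.mk_surjective p
  obtain ⟨f, g, rfl⟩ := exists_eq_invLead_add_invLead_mul_X p
  obtain ⟨q, hq⟩ := h.eps_zero_dvd_invHom_sub hn f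
  obtain ⟨r, hr⟩ := h.eps_zero_dvd_invHom_sub hn g
  refine ⟨f, g, -q - r * eps n k 1, ?_⟩
  rw [map_add, map_mul]
  change _ + _ * eps n k 1 - _ = _
  linear_combination -hq - eps n k 1 * hr

theorem dvd_invHom_X_pow_expOdd (h : IsEpsShift τ) (hn : 2 ≤ n) (hodd : Odd n)
    {e1 : fixedSubalgebra τ} (he1 : (e1 : P n k) = eps n k 0) (j : Fin (n / 2 + 1)) :
    e1 ∣ h.invHom hn (X j) ^ expOdd n k j := by
  have := charP_P (n := n) (k := k) (by omega)
  have hpow {m : ℕ} (hm : n ≤ m) : e1 ^ m = 0 := Subtype.ext <| by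
    push_cast
    rwa [he1, eps_zero_pow_eq_zero_iff]
  have hN (i : Fin (n / 2)) (hi : (i : ℕ) = 0) :
      (h.invHom hn (X i.castSucc) : P n k) = eps n k 1 ^ 2 + e1 * eps n k 1 := by
    rw [invHom_X, invGen_castSucc_of_eq_zero hi, he1]
  cases j using Fin.lastCases with
  | last =>
    suffices hx : h.invHom hn (X (Fin.last _)) ^ 2 = 0 by rw [expOdd_last, hx]; exact dvd_zero _
    refine Subtype.ext ?_
    rw [SubmonoidClass.coe_pow, invHom_X, invGen_last, mul_pow, ← pow_mul,
      eps_zero_pow_eq_zero_iff.2 (by omega), zero_mul, ZeroMemClass.coe_zero]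
  | cast i =>
    have hlt := h.lt_mul_two_pow hodd i
    rw [expOdd_castSucc]
    split_ifs with hi
    · obtain ⟨m, hm⟩ := Nat.exists_eq_succ_of_ne_zero (h.k_ne_zero hodd i)
      have heps := eps_succ_pow_eq_zero (k := k) i
      rw [hi, zero_add] at hm
      rw [hi, zero_add, hm, mul_zero, zero_add, one_mul] at hlt
      rw [hi, zero_add, hm, fin_succ_eq_one hi] at heps
      rw [hm, Nat.succ_sub_one]
      exact dvd_pow_two_pow_of_pow_two_pow_succ_eq_zero (hN i hi) (hpow (by omega)) heps
    · have hi0 : 0 < n / 2 := i.pos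
      refine dvd_of_coe_eq_pow_mul_pow_two_pow (d := 2 * i * 2 ^ k (i + 2)) (m := k (i + 2))
        (hN ⟨0, hi0⟩ rfl) (by positivity) (hpow ?_) ?_
      · rw [add_mul, one_mul] at hlt
        omega
      · rw [SubmonoidClass.coe_pow, invHom_X, invGen_castSucc_of_ne_zero hi, add_pow_char_pow,
          eps_succ_pow_eq_zero, zero_add, mul_pow, ← pow_mul, he1]

theorem dvd_invHom_of_mem (h : IsEpsShift τ) (hn : 2 ≤ n) (hodd : Odd n)
    {e1 : fixedSubalgebra τ} (he1 : (e1 : P n k) = eps n k 0)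
    {f : MvPolynomial (Fin (n / 2 + 1)) (ZMod 2)} (hf : f ∈ relIdealOdd n k) :
    e1 ∣ h.invHom hn f := by
  rw [← Ideal.mem_span_singleton]
  suffices hle : relIdealOdd n k ≤ (Ideal.span {e1}).comap (h.invHom hn) from hle hf
  rw [relIdealOdd_eq_varPowIdeal, varPowIdeal, Ideal.span_le]
  rintro _ ⟨j, rfl⟩
  rw [SetLike.mem_coe, Ideal.mem_comap, map_pow, Ideal.mem_span_singleton]
  exact h.dvd_invHom_X_pow_expOdd hn hodd he1 j

end IsEpsShift

theorem invariant_subalgebra_mod_eps1_of_odd_general (hn : 2 ≤ n) (hodd : Odd n)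
    {τ : P n k →ₐ[ZMod 2] P n k} (h : IsEpsShift τ) {e1 : Pfix n k τ}
    (he1 : (e1 : P n k) = eps n k 0) :
    ∃ iso : (MvPolynomial (Fin (n / 2 + 1)) (ZMod 2) ⧸ relIdealOdd n k) ≃ₐ[ZMod 2]
        (Pfix n k τ ⧸ (Ideal.span {e1} : Ideal (Pfix n k τ))),
      (∀ u : Pfix n k τ, (u : P n k) = eps n k 1 ^ 2 + eps n k 0 * eps n k 1 →
        iso (Ideal.Quotient.mk (relIdealOdd n k) (X 0)) = Ideal.Quotient.mk (Ideal.span {e1}) u) ∧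
      (∀ i : Fin (n / 2), 1 ≤ (i : ℕ) → ∀ u : Pfix n k τ,
        (u : P n k) = eps n k i.succ + eps n k 0 ^ (2 * (i : ℕ)) * eps n k 1 →
        iso (Ideal.Quotient.mk (relIdealOdd n k) (X i.castSucc)) =
          Ideal.Quotient.mk (Ideal.span {e1}) u) ∧
      (∀ u : Pfix n k τ, (u : P n k) = eps n k 0 ^ (n - 1) * eps n k 1 →
        iso (Ideal.Quotient.mk (relIdealOdd n k) (X (Fin.last (n / 2)))) =
          Ideal.Quotient.mk (Ideal.span {e1}) u) := by
  have hx : (h.invHom hn (X (Fin.last _)) : P n k) = (e1 : P n k) ^ (n - 1) * eps n k 1 := by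
    rw [h.invHom_X, invGen_last, he1]
  have hx2 : X (Fin.last (n / 2)) ^ 2 ∈ relIdealOdd n k :=
    Ideal.subset_span ⟨Fin.last _, if_pos rfl⟩
  obtain ⟨iso, hiso⟩ := (h.isTruncatedTranslation hn he1).exists_quotient_algEquiv hn hx
    (fun f => h.dvd_invHom_of_mem hn hodd he1) hx2
    (fun f hf => h.mem_of_eps_zero_dvd_invHom hn (he1 ▸ hf))
    (fun p => he1 ▸ h.exists_eps_zero_dvd_sub hn p)
  have hX (j) (u : Pfix n k τ) (hu : (u : P n k) = invGen n k j) :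
      iso (Ideal.Quotient.mk _ (X j)) = Ideal.Quotient.mk (Ideal.span {e1}) u :=
    (hiso _).trans (congrArg _ (Subtype.ext ((h.invHom_X hn j).trans hu.symm)))
  refine ⟨iso, fun u hu => hX 0 u (hu.trans ?_),
    fun i hi u hu => hX i.castSucc u (hu.trans (invGen_castSucc_of_ne_zero (by omega)).symm),
    fun u hu => hX (Fin.last _) u (hu.trans invGen_last.symm)⟩
  exact (invGen_castSucc_of_eq_zero (i := ⟨0, by omega⟩) rfl).symm

end Generators

/-- Fix `n ≥ 2`, `s = n/2 + 1`, `k i` as in the context, the algebra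
`P = 𝔽₂[ε₁,…,ε_s]/(ε₁ⁿ, ε₂^{2^{k₂}}, …, ε_s^{2^{k_s}})` and the involution `τ` with
`τ(ε̄₁) = ε̄₁`, `τ(ε̄ᵢ) = ε̄ᵢ + ε̄₁^{2i−3}`; `Pfix n k τ` is the invariant subalgebra `P^τ`.
Suppose `n` is odd. Then there is an isomorphism of `𝔽₂`-algebras
`P^τ/(ε̄₁) ≅ 𝔽₂[e₂,…,e_s,x]/(e₂^{2^{k₂−1}}, e₃^{2^{k₃}}, …, e_s^{2^{k_s}}, x²)`
(formulated below in the other direction) sending `e₂` to the class of `ε̄₂² + ε̄₁ε̄₂`,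
`e_i` to the class of `ε̄_i + ε̄₁^{2i−4}ε̄₂` (`3 ≤ i ≤ s`), and `x` to the class of
`ε̄₁^{n−1}ε̄₂`. Here `e1 : P^τ` denotes the element with underlying value `ε̄₁`. -/
theorem invariant_subalgebra_mod_eps1_of_odd
    (n : ℕ) (hn : 2 ≤ n) (hodd : Odd n) (k : ℕ → ℕ)
    (hk : ∀ i : ℕ, 2 ≤ i → i ≤ n / 2 + 1 →
      (2 * i - 3) * 2 ^ k i ≤ 2 * n - 1 ∧ 2 * n - 1 < (2 * i - 3) * 2 ^ (k i + 1))
    (τ : P n k →ₐ[ZMod 2] P n k)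
    (hτ0 : τ (eps n k 0) = eps n k 0)
    (hτ : ∀ i : Fin (n / 2 + 1), 1 ≤ (i : ℕ) →
      τ (eps n k i) = eps n k i + eps n k 0 ^ (2 * (i : ℕ) - 1)) :
    ∀ e1 : Pfix n k τ, (e1 : P n k) = eps n k 0 →
    ∃ iso : (MvPolynomial (Fin (n / 2 + 1)) (ZMod 2) ⧸ relIdealOdd n k) ≃ₐ[ZMod 2]
        (Pfix n k τ ⧸ (Ideal.span {e1} : Ideal (Pfix n k τ))),
      (∀ u : Pfix n k τ, (u : P n k) = eps n k 1 ^ 2 + eps n k 0 * eps n k 1 →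
        iso (Ideal.Quotient.mk (relIdealOdd n k) (X 0)) =
          Ideal.Quotient.mk (Ideal.span {e1}) u) ∧
      (∀ j : Fin (n / 2 + 1), 1 ≤ (j : ℕ) → (hj : (j : ℕ) ≤ n / 2 - 1) →
        ∀ u : Pfix n k τ,
          (u : P n k) = eps n k ⟨(j : ℕ) + 1, by omega⟩
              + eps n k 0 ^ (2 * (j : ℕ)) * eps n k 1 →
          iso (Ideal.Quotient.mk (relIdealOdd n k) (X j)) =
            Ideal.Quotient.mk (Ideal.span {e1}) u) ∧
      (∀ u : Pfix n k τ, (u : P n k) = eps n k 0 ^ (n - 1) * eps n k 1 →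
        iso (Ideal.Quotient.mk (relIdealOdd n k) (X ⟨n / 2, by omega⟩)) =
          Ideal.Quotient.mk (Ideal.span {e1}) u) :=
  fun _ he1 =>
    let ⟨iso, h0, hi, hx⟩ := invariant_subalgebra_mod_eps1_of_odd_general hn hodd
      ⟨hτ0, fun i => hτ i.succ (Nat.succ_pos i)⟩ he1
    ⟨iso, h0, fun j hj hj' => hi ⟨j, by omega⟩ hj, hx⟩
end
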